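/- arXiv:math-ph/0506064 — 6 statements merged into one kernel-verified Lean document; each statement's English description precedes it below -/
import Mathlib

section
/- Let f : ℝ^N → ℝ^N be a smooth vector field that is divergence-free and admits a smooth conserved quantity H : ℝ^N → ℝ (i.e. ⟨∇H(z), f(z)⟩ = 0 for all z ∈ ℝ^N) whose sublevel sets {z : H(z) ≤ K} are compact for every K > 0. Let E ⊆ ℝ^N be a linear subspace with basis e₁, …, e_n, and suppose the following Hörmander condition holds: defining on ℝ^{N+1} the extended vector fields f̃(z,t) = (f(z), 1) and ẽ_i(z,t) = (e_i, 0), the smallest family of smooth vector fields on ℝ^{N+1} containing {f̃, ẽ₁, …, ẽ_n} and closed under Lie brackets spans ℝ^{N+1} at every point. Then for every initial condition z₀ ∈ ℝ^N and every terminal condition z₁ ∈ ℝ^N there exist a time T > 0 and a smooth control u ∈ C^∞([0,T], E) such that the solution of the ODE ż(t) = f(z(t)) + u(t) with z(0) = z₀ satisfies z(T) = z₁. -/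
open scoped Topology

/-- The Lie bracket of two vector fields: `[X,Y](z) = DY(z) X(z) - DX(z) Y(z)`. -/
noncomputable def lieBracket {V : Type*} [NormedAddCommGroup V] [NormedSpace ℝ V]
    (X Y : V → V) : V → V :=
  fun z => fderiv ℝ Y z (X z) - fderiv ℝ X z (Y z)

/-- The smallest family of vector fields containing `S` and closed under Lie brackets. -/
inductive LieGen {V : Type*} [NormedAddCommGroup V] [NormedSpace ℝ V]
    (S : Set (V → V)) : (V → V) → Prop
  | base (X : V → V) (hX : X ∈ S) : LieGen S X
  | bracket (X Y : V → V) (hX : LieGen S X) (hY : LieGen S Y) : LieGen S (lieBracket X Y)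

open Set Filter Metric NNReal

namespace CC

section ODE
variable {X : Type*} [NormedAddCommGroup X] [NormedSpace ℝ X]

lemma glue {v : ℝ → X → X} {a b c : ℝ} {z α : ℝ → X}
    (hz : ∀ t ∈ Icc a b, HasDerivAt z (v t (z t)) t)
    (hα : ∀ t ∈ Icc b c, HasDerivAt α (v t (α t)) t) (hab : a ≤ b) (hbc : b ≤ c) (h : z b = α b) :
    ∀ t ∈ Icc a c, HasDerivAt (fun t => if t ≤ b then z t else α t)
      (v t ((fun t => if t ≤ b then z t else α t) t)) t := by
  intro t ht
  rcases lt_trichotomy t b with h1 | h1 | h1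
  · have := hz t ⟨ht.1, h1.le⟩
    simp only [h1.le, if_true]
    refine this.congr_of_eventuallyEq ?_
    filter_upwards [Iio_mem_nhds h1] with s hs
    rw [if_pos (le_of_lt (mem_Iio.mp hs))]
  · subst h1
    simp only [le_refl, if_true]
    have h1 := hz t ⟨ht.1, le_refl _⟩
    have h2 := hα t ⟨le_refl _, ht.2⟩
    rw [← h] at h2
    have : HasDerivWithinAt (fun s => if s ≤ t then z s else α s) (v t (z t)) (Iic t ∪ Ici t) t := by
      apply HasDerivWithinAt.union
      · refine h1.hasDerivWithinAt.congr_of_mem ?_ (by simp)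
        intro s hs
        simp only [mem_Iic] at hs
        simp [hs]
      · refine h2.hasDerivWithinAt.congr_of_mem ?_ (by simp)
        intro s hs
        simp only [mem_Ici] at hs
        rcases hs.eq_or_lt with h3 | h3
        · subst h3; simp [h]
        · simp [h3]
    rwa [Iic_union_Ici, hasDerivWithinAt_univ] at this
  · have := hα t ⟨h1.le, ht.2⟩
    simp only [not_le.mpr h1, if_false]
    refine this.congr_of_eventuallyEq ?_
    filter_upwards [Ioi_mem_nhds h1] with s hs
    rw [if_neg (not_le.mpr (mem_Ioi.mp hs))]

/-- Gronwall wrapper -/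
lemma gron {ρ ρ' : ℝ → X} {K δ ε T : ℝ} (hK : 0 ≤ K) (hε : 0 ≤ ε) (hδ : 0 ≤ δ)
    (h : ∀ t ∈ Icc 0 T, HasDerivAt ρ (ρ' t) t) (h0 : ‖ρ 0‖ ≤ δ)
    (hb : ∀ t ∈ Icc 0 T, ‖ρ' t‖ ≤ K * ‖ρ t‖ + ε) :
    ∀ t ∈ Icc 0 T, ‖ρ t‖ ≤ (δ + ε * T) * Real.exp (K * T) := by
  intro t ht
  have h1 := norm_le_gronwallBound_of_norm_deriv_right_le (f := ρ) (f' := ρ') (a := 0) (b := T)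
    (fun t ht => (h t ht).continuousAt.continuousWithinAt)
    (fun t ht => (h t ⟨ht.1, ht.2.le⟩).hasDerivWithinAt) h0 (fun t ht => hb t ⟨ht.1, ht.2.le⟩) t ht
  have h2 := gronwallBound_mono hδ hε hK (a := t - 0) (b := T) (by linarith [ht.2])
  have hT : 0 ≤ T := ht.1.trans ht.2
  refine h1.trans (h2.trans ?_)
  by_cases hK0 : K = 0
  · subst hK0; rw [gronwallBound_K0]; simp
  · rw [gronwallBound_of_K_ne_0 hK0]
    have hKp : 0 < K := lt_of_le_of_ne hK (Ne.symm hK0)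
    have h3 : Real.exp (K * T) - 1 ≤ K * T * Real.exp (K * T) := by
      have h4 := Real.add_one_le_exp (-(K * T))
      have h5 : Real.exp (-(K * T)) * Real.exp (K * T) = 1 := by rw [← Real.exp_add]; simp
      nlinarith [Real.exp_pos (K * T)]
    have h6 : ε / K * (Real.exp (K * T) - 1) ≤ ε / K * (K * T * Real.exp (K * T)) := by
      gcongr
    have h7 : ε / K * (K * T * Real.exp (K * T)) = ε * T * Real.exp (K * T) := by
      field_simp
    simp only
    linarith

variable [CompleteSpace X]

lemma local_exist {v : ℝ → X → X} {K : ℝ≥0} (hv : ∀ t, LipschitzWith K (v t))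
    (hc : ∀ x, Continuous fun t => v t x) (t₀ : ℝ) (x₀ : X) :
    ∃ α : ℝ → X, α t₀ = x₀ ∧ ∀ t ∈ Ioo (t₀ - 1 / (2 * (K + 1))) (t₀ + 1 / (2 * (K + 1))),
      HasDerivAt α (v t (α t)) t := by
  set τ : ℝ := 1 / (2 * (K + 1)) with hτ
  have hτ0 : 0 < τ := by positivity
  obtain ⟨B, hB⟩ := (isCompact_Icc (a := t₀ - τ) (b := t₀ + τ)).exists_bound_of_continuousOn
    (hc x₀).continuousOn
  have hB0 : 0 ≤ B := (norm_nonneg _).trans (hB t₀ ⟨by linarith, by linarith⟩)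
  lift B to ℝ≥0 using hB0
  have hK : (K : ℝ) * τ ≤ 1 / 2 := by
    rw [hτ]; rw [mul_one_div, div_le_div_iff₀ (by positivity) (by norm_num)]
    have := K.coe_nonneg
    linarith
  have hτ2 : τ ≤ 1 / 2 := by
    rw [hτ]; rw [div_le_div_iff₀ (by positivity) (by norm_num)]
    have := K.coe_nonneg
    linarith
  have hPL : IsPicardLindelof v (tmin := t₀ - τ) (tmax := t₀ + τ)
      ⟨t₀, by constructor <;> linarith⟩ x₀ B 0 (B + K * B) K := by
    refine ⟨fun t _ => (hv t).lipschitzOnWith, fun x _ => (hc x).continuousOn, ?_, ?_⟩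
    · intro t ht x hx
      have h1 := hB t ht
      have h2 := (hv t).dist_le_mul x x₀
      rw [mem_closedBall] at hx
      rw [dist_eq_norm] at h2
      have h3 : ‖v t x‖ ≤ ‖v t x - v t x₀‖ + ‖v t x₀‖ := by
        simpa using norm_add_le (v t x - v t x₀) (v t x₀)
      have h4 : (K : ℝ) * dist x x₀ ≤ K * B := by
        apply mul_le_mul_of_nonneg_left hx K.coe_nonneg
      push_cast
      linarith
    · push_cast
      simp only [add_sub_cancel_left, sub_sub_cancel, max_self, sub_zero]
      nlinarith [B.coe_nonneg, mul_le_mul_of_nonneg_right hK B.coe_nonneg, mul_le_mul_of_nonneg_right hτ2 B.coe_nonneg]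
  obtain ⟨α, h0, h1⟩ := hPL.exists_eq_forall_mem_Icc_hasDerivWithinAt₀
  exact ⟨α, h0, fun t ht => (h1 t ⟨ht.1.le, ht.2.le⟩).hasDerivAt (Icc_mem_nhds ht.1 ht.2)⟩

lemma global_exist {v : ℝ → X → X} {K : ℝ≥0} (hv : ∀ t, LipschitzWith K (v t))
    (hc : ∀ x, Continuous fun t => v t x) (x₀ : X) :
    ∃ z : ℝ → X, z 0 = x₀ ∧ ∀ t, HasDerivAt z (v t (z t)) t := by
  set τ : ℝ := 1 / (2 * (K + 1)) with hτ
  have hτ0 : 0 < τ := by positivity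
  set σ := τ / 2 with hσ
  have hσ0 : 0 < σ := by positivity
  have step : ∀ n : ℕ, ∃ z : ℝ → X, z 0 = x₀ ∧
      ∀ t ∈ Icc (-(n * σ)) (n * σ), HasDerivAt z (v t (z t)) t := by
    intro n
    induction n with
    | zero =>
      obtain ⟨α, h0, h1⟩ := local_exist hv hc 0 x₀
      refine ⟨α, h0, fun t ht => h1 t ?_⟩
      simp only [CharP.cast_eq_zero, zero_mul, neg_zero, Icc_self, mem_singleton_iff] at ht
      subst ht
      constructor <;> linarith
    | succ n ih =>
      obtain ⟨z, h0, h1⟩ := ih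
      have hn : (0 : ℝ) ≤ n * σ := by positivity
      obtain ⟨α, ha0, ha1⟩ := local_exist hv hc (n * σ) (z (n * σ))
      obtain ⟨β, hb0, hb1⟩ := local_exist hv hc (-(n * σ)) (z (-(n * σ)))
      have g1 := glue (v := v) (a := -(n * σ)) (b := n * σ) (c := (n * σ) + σ) (z := z) (α := α) h1
        (fun t ht => ha1 t ⟨by linarith [ht.1], by linarith [ht.2]⟩) (by linarith) (by linarith)
        ha0.symm
      have g2 := glue (v := v) (a := -(n * σ) - σ) (b := -(n * σ)) (c := (n * σ) + σ) (z := β)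
        (fun t ht => hb1 t ⟨by linarith [ht.1], by linarith [ht.2]⟩) g1 (by linarith) (by linarith)
        (by rw [hb0]; rw [if_pos (by linarith)])
      refine ⟨_, ?_, fun t ht => g2 t ?_⟩
      · by_cases hn0 : 0 ≤ -(n * σ)
        · have : n * σ = 0 := by linarith
          rw [this] at hb0 ⊢
          simp only [neg_zero] at hb0
          simp [hb0, h0]
        · rw [if_neg hn0, if_pos hn, h0]
      · push_cast at ht
        constructor <;> nlinarith [ht.1, ht.2]
  choose z hz0 hz1 using step
  have agree : ∀ n m : ℕ, n ≤ m → 0 < n → ∀ t ∈ Ioo (-(n * σ)) (n * σ), z n t = z m t := by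
    intro n m hnm hn t ht
    have hnσ : (n : ℝ) * σ ≤ m * σ := by
      apply mul_le_mul_of_nonneg_right (by exact_mod_cast hnm) hσ0.le
    have hn' : (0 : ℝ) < n * σ := by positivity
    refine ODE_solution_unique_of_mem_Ioo (v := v) (s := fun _ => univ) (t₀ := 0)
      (fun t _ => (hv t).lipschitzOnWith) ⟨by linarith, by linarith⟩ ?_ ?_ (by rw [hz0, hz0]) ht
    · intro s hs
      exact ⟨hz1 n s ⟨hs.1.le, hs.2.le⟩, trivial⟩
    · intro s hs
      exact ⟨hz1 m s ⟨by linarith [hs.1], by linarith [hs.2]⟩, trivial⟩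
  let m : ℝ → ℕ := fun t => ⌈|t| / σ⌉₊ + 1
  have hm : ∀ t, |t| < m t * σ := by
    intro t
    have := Nat.le_ceil (|t| / σ)
    rw [div_le_iff₀ hσ0] at this
    simp only [m]; push_cast
    linarith
  refine ⟨fun t => z (m t) t, hz0 _, fun t => ?_⟩
  have hmt := abs_lt.mp (hm t)
  refine (hz1 (m t) t ⟨hmt.1.le, hmt.2.le⟩).congr_of_eventuallyEq ?_
  filter_upwards [Ioo_mem_nhds hmt.1 hmt.2] with s hs
  rcases le_total (m s) (m t) with h | h
  · exact agree _ _ h (Nat.succ_pos _) s (abs_lt.mp (hm s))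
  · exact (agree _ _ h (Nat.succ_pos _) s hs).symm

end ODE

end CC

open Set Filter Metric NNReal

set_option linter.unusedSectionVars false

namespace CC

section Nice
variable {V : Type*} [NormedAddCommGroup V] [NormedSpace ℝ V]

structure Nice (g : V → V) (K : ℝ≥0) (M : ℝ) : Prop where
  smooth : ContDiff ℝ (⊤ : ℕ∞) g
  lip : LipschitzWith K g
  bd : ∀ x, ‖g x‖ ≤ M
  dbd : ∀ x, ‖fderiv ℝ g x‖ ≤ K
  uc : UniformContinuous (fderiv ℝ g)

lemma trunc [FiniteDimensional ℝ V] {f : V → V} (hf : ContDiff ℝ (⊤ : ℕ∞) f) {r : ℝ} (hr : 0 < r) :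
    ∃ (χ : V → ℝ) (g : V → V) (K : ℝ≥0) (M : ℝ), Nice g K M ∧ (∀ x, g x = χ x • f x) ∧
      ∀ x ∈ closedBall (0 : V) r, g x = f x := by
  let χ : ContDiffBump (0 : V) := ⟨r, r + 1, hr, by linarith⟩
  let g : V → V := fun x => χ x • f x
  have hg : ContDiff ℝ (⊤ : ℕ∞) g := χ.contDiff.smul hf
  have hcs : HasCompactSupport g := χ.hasCompactSupport.smul_right
  have hcs' : HasCompactSupport (fderiv ℝ g) := hcs.fderiv ℝ
  have hcd : Continuous (fderiv ℝ g) := hg.continuous_fderiv (by simp)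
  obtain ⟨M, hM⟩ := hg.continuous.bounded_above_of_compact_support hcs
  obtain ⟨K, hK⟩ := hcd.bounded_above_of_compact_support hcs'
  have hK0 : 0 ≤ K := (norm_nonneg _).trans (hK 0)
  lift K to ℝ≥0 using hK0
  refine ⟨χ, g, K, M, ⟨hg, ?_, hM, hK, ?_⟩, fun x => rfl, ?_⟩
  · exact lipschitzWith_of_nnnorm_fderiv_le (hg.differentiable (by simp)) (fun x => hK x)
  · exact hcd.uniformContinuous_of_tendsto_cocompact (hcs'.is_zero_at_infty)
  · intro x hx
    simp only [g]
    rw [χ.one_of_mem_closedBall hx, one_smul]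

variable {g : V → V} {K : ℝ≥0} {M : ℝ}

lemma Nice.diff (hg : Nice g K M) : Differentiable ℝ g := hg.smooth.differentiable (by simp)

lemma Nice.unif (hg : Nice g K M) {ε : ℝ} (hε : 0 < ε) : ∃ η > 0, ∀ c a b : V, dist a c < η →
    dist b c < η → ‖g a - g b - fderiv ℝ g c (a - b)‖ ≤ ε * ‖a - b‖ := by
  obtain ⟨η, hη, h⟩ := Metric.uniformContinuous_iff.mp hg.uc ε hε
  refine ⟨η, hη, fun c a b ha hb => ?_⟩
  refine (convex_ball c η).norm_image_sub_le_of_norm_fderiv_le' (𝕜 := ℝ)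
    (fun x _ => hg.diff x) (fun x hx => ?_) hb ha
  rw [← dist_eq_norm]
  exact (h hx).le

variable [CompleteSpace V]

/-- controlled solution -/
lemma Nice.sol (hg : Nice g K M) {u : ℝ → V} (hu : Continuous u) (x : V) :
    ∃ z : ℝ → V, z 0 = x ∧ ∀ t, HasDerivAt z (g (z t) + u t) t := by
  refine global_exist (v := fun t x => g x + u t) (K := K) (fun t => ?_) (fun x => ?_) x
  · exact LipschitzWith.of_dist_le_mul fun a b => by
      simpa using hg.lip.dist_le_mul a b
  · fun_prop

lemma Nice.unique (hg : Nice g K M) {u₁ u₂ : ℝ → V} {z₁ z₂ : ℝ → V} {T : ℝ}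
    (h0 : z₁ 0 = z₂ 0) (hu : ∀ t ∈ Icc 0 T, u₁ t = u₂ t)
    (h1 : ∀ t ∈ Icc 0 T, HasDerivAt z₁ (g (z₁ t) + u₁ t) t)
    (h2 : ∀ t ∈ Icc 0 T, HasDerivAt z₂ (g (z₂ t) + u₂ t) t) : ∀ t ∈ Icc 0 T, z₁ t = z₂ t := by
  refine ODE_solution_unique (v := fun t x => g x + u₁ t) (K := K) (fun t => ?_) ?_ ?_ ?_ ?_ h0
  · exact LipschitzWith.of_dist_le_mul fun a b => by
      simpa using hg.lip.dist_le_mul a b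
  · exact fun t ht => (h1 t ht).continuousAt.continuousWithinAt
  · exact fun t ht => (h1 t ⟨ht.1, ht.2.le⟩).hasDerivWithinAt
  · exact fun t ht => (h2 t ht).continuousAt.continuousWithinAt
  · intro t ht
    rw [hu t ⟨ht.1, ht.2.le⟩]
    exact (h2 t ⟨ht.1, ht.2.le⟩).hasDerivWithinAt

lemma Nice.close (hg : Nice g K M) {u : ℝ → V} {z₁ z₂ : ℝ → V} {T : ℝ}
    (h1 : ∀ t ∈ Icc 0 T, HasDerivAt z₁ (g (z₁ t) + u t) t)
    (h2 : ∀ t ∈ Icc 0 T, HasDerivAt z₂ (g (z₂ t) + u t) t) :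
    ∀ t ∈ Icc 0 T, ‖z₁ t - z₂ t‖ ≤ ‖z₁ 0 - z₂ 0‖ * Real.exp (K * T) := by
  intro t ht
  have := gron (ρ := fun t => z₁ t - z₂ t) (K := K) (δ := ‖z₁ 0 - z₂ 0‖) (ε := 0) (T := T)
    K.coe_nonneg le_rfl (norm_nonneg _) (fun t ht => (h1 t ht).sub (h2 t ht)) le_rfl
    (fun t ht => by
      rw [add_sub_add_right_eq_sub, add_zero]
      simpa [dist_eq_norm] using hg.lip.dist_le_mul (z₁ t) (z₂ t)) t ht
  simpa using this

variable {P : Type*} [NormedAddCommGroup P] [NormedSpace ℝ P]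

lemma Nice.param_lip (hg : Nice g K M) {T : ℝ} {u : ℝ → V} {Λ : ℝ → P →L[ℝ] V}
    (hΛ : Continuous Λ) {A : P →L[ℝ] V} {x : V} {z : P → ℝ → V} (hz0 : ∀ p, z p 0 = x + A p)
    (hz : ∀ p t, HasDerivAt (z p) (g (z p t) + (u t + Λ t p)) t) :
    ∃ C : ℝ, 0 ≤ C ∧ ∀ p q, ∀ t ∈ Icc 0 T, ‖z p t - z q t‖ ≤ C * ‖p - q‖ := by
  obtain ⟨B, hB⟩ := (isCompact_Icc (a := 0) (b := T)).exists_bound_of_continuousOn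
    hΛ.continuousOn
  have hB' : ∀ t ∈ Icc 0 T, ‖Λ t‖ ≤ max B 0 := fun t ht => (hB t ht).trans (le_max_left _ _)
  have hB0 : 0 ≤ max B 0 := le_max_right _ _
  refine ⟨(‖A‖ + max B 0 * |T|) * Real.exp (K * T), by positivity, fun p q t ht => ?_⟩
  have hT : 0 ≤ T := ht.1.trans ht.2
  have := gron (ρ := fun t => z p t - z q t) (K := K) (δ := ‖A‖ * ‖p - q‖)
    (ε := max B 0 * ‖p - q‖) (T := T)
    K.coe_nonneg (by positivity) (by positivity) (fun t ht => (hz p t).sub (hz q t)) 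
    (by rw [hz0, hz0, add_sub_add_left_eq_sub, ← map_sub]; exact A.le_opNorm _)
    (fun t ht => by
      have h1 : g (z p t) + (u t + Λ t p) - (g (z q t) + (u t + Λ t q))
        = (g (z p t) - g (z q t)) + Λ t (p - q) := by rw [map_sub]; abel
      rw [h1]
      refine (norm_add_le _ _).trans (add_le_add ?_ ?_)
      · simpa [dist_eq_norm] using hg.lip.dist_le_mul (z p t) (z q t)
      · exact (Λ t).le_of_opNorm_le (hB' t ht) _) t ht
  rw [abs_of_nonneg hT]
  refine this.trans (le_of_eq (by ring))

lemma Nice.endpoint (hg : Nice g K M) {T : ℝ} (hT : 0 ≤ T) {u : ℝ → V} {Λ : ℝ → P →L[ℝ] V}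
    (hΛ : Continuous Λ) {A : P →L[ℝ] V} {x : V} {z : P → ℝ → V} (hz0 : ∀ p, z p 0 = x + A p)
    (hz : ∀ p t, HasDerivAt (z p) (g (z p t) + (u t + Λ t p)) t) {Ξ : ℝ → P →L[ℝ] V}
    (hΞ0 : Ξ 0 = A) (hΞ : ∀ t, HasDerivAt Ξ ((fderiv ℝ g (z 0 t)).comp (Ξ t) + Λ t) t) :
    HasStrictFDerivAt (fun p => z p T) (Ξ T) 0 := by
  obtain ⟨C, hC0, hC⟩ := hg.param_lip (T := T) hΛ hz0 hz
  refine .of_isLittleO ?_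
  rw [Asymptotics.isLittleO_iff]
  intro c hc
  set D : ℝ := C * T * Real.exp (K * T) + 1 with hD
  have hD0 : 0 < D := by positivity
  obtain ⟨η, hη, h⟩ := hg.unif (ε := c / D) (by positivity)
  have hnear : ∀ p : P, ‖p‖ < η / (C + 1) → ∀ t ∈ Icc 0 T, dist (z p t) (z 0 t) < η := by
    intro p hp t ht
    rw [dist_eq_norm]
    have h1 := hC p 0 t ht
    rw [sub_zero] at h1
    rw [lt_div_iff₀ (by positivity)] at hp
    nlinarith [norm_nonneg p]
  have hb : ball (0 : P × P) (η / (C + 1)) ∈ 𝓝 ((0 : P), (0 : P)) :=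
    ball_mem_nhds _ (by positivity)
  filter_upwards [hb] with pq hpq
  obtain ⟨p, q⟩ := pq
  rw [mem_ball_zero_iff, Prod.norm_mk, max_lt_iff] at hpq
  simp only
  have hder : ∀ t, HasDerivAt (fun t => Ξ t (p - q))
      (fderiv ℝ g (z 0 t) (Ξ t (p - q)) + Λ t (p - q)) t := fun t => by
    simpa using (hΞ t).clm_apply (hasDerivAt_const t (p - q))
  have := gron (ρ := fun t => z p t - z q t - Ξ t (p - q)) (K := K) (δ := 0)
    (ε := c / D * (C * ‖p - q‖)) (T := T)
    K.coe_nonneg (by positivity) le_rfl (fun t ht => ((hz p t).sub (hz q t)).sub (hder t)) 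
    (by rw [hz0, hz0, hΞ0, map_sub]; simp)
    (fun t ht => by
      have h1 : g (z p t) + (u t + Λ t p) - (g (z q t) + (u t + Λ t q)) -
          (fderiv ℝ g (z 0 t) (Ξ t (p - q)) + Λ t (p - q))
        = fderiv ℝ g (z 0 t) (z p t - z q t - Ξ t (p - q)) +
          (g (z p t) - g (z q t) - fderiv ℝ g (z 0 t) (z p t - z q t)) := by
        simp only [map_sub]; abel
      rw [h1]
      refine (norm_add_le _ _).trans (add_le_add ?_ ?_)
      · exact ContinuousLinearMap.le_of_opNorm_le _ (hg.dbd _) _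
      · refine (h _ _ _ (hnear p hpq.1 t ht) (hnear q hpq.2 t ht)).trans ?_
        gcongr
        exact hC p q t ht) T ⟨hT, le_rfl⟩
  refine this.trans ?_
  have h2 : (0 + c / D * (C * ‖p - q‖) * T) * Real.exp (K * T)
    = (C * T * Real.exp (K * T)) / D * (c * ‖p - q‖) := by field_simp; ring
  rw [h2]
  have h3 : (C * T * Real.exp (K * T)) / D ≤ 1 := by
    rw [div_le_one hD0]; linarith
  calc _ ≤ 1 * (c * ‖p - q‖) := by gcongr
    _ = _ := by ring

/-- linear variational equations -/
lemma Nice.exPsi (hg : Nice g K M) {z : ℝ → V} (hz : Continuous z) :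
    ∃ Ψ : ℝ → V →L[ℝ] V, Ψ 0 = ContinuousLinearMap.id ℝ V ∧
      ∀ t, HasDerivAt Ψ (-((Ψ t).comp (fderiv ℝ g (z t)))) t := by
  have hc : Continuous fun t => fderiv ℝ g (z t) := hg.uc.continuous.comp hz
  refine global_exist (v := fun t (Ψ : V →L[ℝ] V) => -(Ψ.comp (fderiv ℝ g (z t)))) (K := K)
    (fun t => ?_) (fun x => ?_) _
  · refine LipschitzWith.of_dist_le_mul fun a b => ?_
    rw [dist_neg_neg, dist_eq_norm, dist_eq_norm, ← ContinuousLinearMap.sub_comp]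
    refine (ContinuousLinearMap.opNorm_comp_le _ _).trans ?_
    rw [mul_comm]
    gcongr
    exact hg.dbd _
  · exact (continuous_const.clm_comp hc).neg

lemma Nice.exXi (hg : Nice g K M) {z : ℝ → V} (hz : Continuous z) {Λ : ℝ → P →L[ℝ] V}
    (hΛ : Continuous Λ) (A : P →L[ℝ] V) :
    ∃ Ξ : ℝ → P →L[ℝ] V, Ξ 0 = A ∧
      ∀ t, HasDerivAt Ξ ((fderiv ℝ g (z t)).comp (Ξ t) + Λ t) t := by
  have hc : Continuous fun t => fderiv ℝ g (z t) := hg.uc.continuous.comp hz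
  refine global_exist (v := fun t (Ξ : P →L[ℝ] V) => (fderiv ℝ g (z t)).comp Ξ + Λ t) (K := K)
    (fun t => ?_) (fun x => ?_) _
  · refine LipschitzWith.of_dist_le_mul fun a b => ?_
    rw [dist_add_right, dist_eq_norm, dist_eq_norm, ← ContinuousLinearMap.comp_sub]
    refine (ContinuousLinearMap.opNorm_comp_le _ _).trans ?_
    gcongr
    exact hg.dbd _
  · exact (hc.clm_comp continuous_const).add hΛ

end Nice

end CC

open Set Filter Metric NNReal

namespace CC

set_option linter.unusedSectionVars false

section Reach
variable {V : Type*} [NormedAddCommGroup V] [NormedSpace ℝ V]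

def Traj (f : V → V) (u : ℝ → V) (T : ℝ) (x y : V) : Prop :=
  ∃ z : ℝ → V, z 0 = x ∧ (∀ t ∈ Icc (0 : ℝ) T, HasDerivAt z (f (z t) + u t) t) ∧ z T = y

structure Adm (E : Submodule ℝ V) (T : ℝ) (u : ℝ → V) : Prop where
  smooth : ContDiff ℝ (⊤ : ℕ∞) u
  mem : ∀ t, u t ∈ E
  left : ∀ t ≤ 0, u t = 0
  right : ∀ t, T ≤ t → u t = 0

def R (f : V → V) (E : Submodule ℝ V) (x y : V) : Prop :=
  ∃ T > 0, ∃ u, Adm E T u ∧ Traj f u T x y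

lemma Adm.zero (E : Submodule ℝ V) (T : ℝ) : Adm E T (fun _ => (0 : V)) :=
  ⟨contDiff_const, fun _ => E.zero_mem, fun _ _ => rfl, fun _ _ => rfl⟩

variable {f : V → V} {E : Submodule ℝ V}

lemma R.trans {x y w : V} (h1 : R f E x y) (h2 : R f E y w) : R f E x w := by
  obtain ⟨T₁, hT₁, u₁, hu₁, z₁, a1, a2, a3⟩ := h1
  obtain ⟨T₂, hT₂, u₂, hu₂, z₂, b1, b2, b3⟩ := h2
  refine ⟨T₁ + T₂, by linarith, fun t => u₁ t + u₂ (t - T₁), ⟨?_, ?_, ?_, ?_⟩, ?_⟩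
  · exact hu₁.smooth.add (hu₂.smooth.comp (contDiff_id.sub contDiff_const))
  · exact fun t => E.add_mem (hu₁.mem _) (hu₂.mem _)
  · intro t ht
    rw [hu₁.left t ht, hu₂.left _ (by linarith), add_zero]
  · intro t ht
    rw [hu₁.right t (by linarith), hu₂.right _ (by linarith), add_zero]
  · have := glue (v := fun t x => f x + (u₁ t + u₂ (t - T₁))) (a := 0) (b := T₁) (c := T₁ + T₂)
      (z := z₁) (α := fun t => z₂ (t - T₁)) ?_ ?_ hT₁.le (by linarith) ?_
    · refine ⟨_, ?_, this, ?_⟩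
      · simp [hT₁.le, a1]
      · simp [not_le.mpr hT₂, b3]
    · intro t ht
      have := a2 t ht
      rwa [hu₂.left _ (by linarith [ht.2]), add_zero]
    · intro t ht
      have := (b2 (t - T₁) ⟨by linarith [ht.1], by linarith [ht.2]⟩).comp_sub_const t T₁
      rwa [hu₁.right t ht.1, zero_add]
    · simp [a3, b1]

lemma Traj.rev {u : ℝ → V} {T : ℝ} {x y : V} (h : Traj f u T x y) :
    Traj (fun x => - f x) (fun t => - u (T - t)) T y x := by
  obtain ⟨z, a1, a2, a3⟩ := h
  refine ⟨fun t => z (T - t), by simp [a3], ?_, by simp [a1]⟩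
  intro t ht
  have := (a2 (T - t) ⟨by linarith [ht.2], by linarith [ht.1]⟩).comp_const_sub T t
  rw [← neg_add]
  exact this

lemma R.rev {x y : V} (h : R f E x y) : R (fun x => - f x) E y x := by
  obtain ⟨T, hT, u, hu, h⟩ := h
  refine ⟨T, hT, _, ⟨?_, ?_, ?_, ?_⟩, h.rev⟩
  · exact (hu.smooth.comp (contDiff_const.sub contDiff_id)).neg
  · exact fun t => E.neg_mem (hu.mem _)
  · intro t ht
    rw [hu.right _ (by linarith), neg_zero]
  · intro t ht
    rw [hu.left _ (by linarith), neg_zero]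

lemma R.rev' {x y : V} (h : R (fun x => - f x) E y x) : R f E x y := by
  simpa using h.rev

variable [FiniteDimensional ℝ V]

/-- a trajectory stays in some big ball -/
lemma traj_bdd {z : ℝ → V} {T : ℝ} (hz : ContinuousOn z (Icc 0 T)) :
    ∃ r > 0, ∀ t ∈ Icc 0 T, ‖z t‖ < r := by
  obtain ⟨B, hB⟩ := (isCompact_Icc (a := 0) (b := T)).exists_bound_of_continuousOn hz
  exact ⟨max B 0 + 1, by positivity, fun t ht => by
    have := hB t ht; have := le_max_left B 0; linarith⟩

lemma Traj.cont (hf : ContDiff ℝ (⊤ : ℕ∞) f) {u : ℝ → V} (hu : Continuous u) {T : ℝ} (hT : 0 ≤ T)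
    {x y : V} (h : Traj f u T x y) {ε : ℝ} (hε : 0 < ε) :
    ∃ δ > 0, ∀ x', dist x' x < δ → ∃ y', dist y' y < ε ∧ Traj f u T x' y' := by
  obtain ⟨z, a1, a2, a3⟩ := h
  obtain ⟨r, hr, hzr⟩ := traj_bdd (z := z) (T := T)
    (fun t ht => (a2 t ht).continuousAt.continuousWithinAt)
  obtain ⟨χ, g, K, M, hg, -, hgf⟩ := trunc hf (r := r + 1) (by linarith)
  have ha2 : ∀ t ∈ Icc 0 T, HasDerivAt z (g (z t) + u t) t := by
    intro t ht
    rw [hgf (z t) (by have := hzr t ht; rw [mem_closedBall_zero_iff]; linarith)]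
    exact a2 t ht
  refine ⟨min ε 1 / Real.exp (K * T), by positivity, fun x' hx' => ?_⟩
  obtain ⟨z', b1, b2⟩ := hg.sol hu x'
  have hcl := hg.close (fun t _ => b2 t) ha2
  rw [a1, b1, ← dist_eq_norm] at hcl
  rw [lt_div_iff₀ (by positivity)] at hx'
  have hcl' : ∀ t ∈ Icc 0 T, ‖z' t - z t‖ < min ε 1 := fun t ht => (hcl t ht).trans_lt hx'
  refine ⟨z' T, ?_, z', b1, fun t ht => ?_, rfl⟩
  · rw [← a3, dist_eq_norm]
    exact (hcl' T ⟨hT, le_rfl⟩).trans_le (min_le_left _ _)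
  · rw [← hgf (z' t)]
    · exact b2 t
    · rw [mem_closedBall_zero_iff]
      have h1 := (hcl' t ht).trans_le (min_le_right _ _)
      have h2 := hzr t ht
      have h3 := norm_add_le (z' t - z t) (z t)
      rw [sub_add_cancel] at h3
      linarith

lemma R.cont (hf : ContDiff ℝ (⊤ : ℕ∞) f) {x y : V} (h : R f E x y) {ε : ℝ} (hε : 0 < ε) :
    ∃ δ > 0, ∀ x', dist x' x < δ → ∃ y', dist y' y < ε ∧ R f E x' y' := by
  obtain ⟨T, hT, u, hu, h⟩ := h
  obtain ⟨δ, hδ, h⟩ := h.cont hf hu.smooth.continuous hT.le hε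
  refine ⟨δ, hδ, fun x' hx' => ?_⟩
  obtain ⟨y', h1, h2⟩ := h x' hx'
  exact ⟨y', h1, T, hT, u, hu, h2⟩

/-- the smooth jump profile -/
noncomputable def prof (h : ℝ) (t : ℝ) : ℝ := Real.smoothTransition (3 * (t / h) - 1)

lemma prof_smooth (h : ℝ) : ContDiff ℝ (⊤ : ℕ∞) (prof h) := by
  unfold prof
  exact Real.smoothTransition.contDiff.comp (by fun_prop)

lemma prof_left {h : ℝ} (hh : 0 < h) {t : ℝ} (ht : t ≤ h / 3) : prof h t = 0 := by
  unfold prof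
  apply Real.smoothTransition.zero_of_nonpos
  have : t / h ≤ 1 / 3 := by rw [div_le_iff₀ hh]; linarith
  linarith

lemma prof_right {h : ℝ} (hh : 0 < h) {t : ℝ} (ht : 2 * h / 3 ≤ t) : prof h t = 1 := by
  unfold prof
  apply Real.smoothTransition.one_of_one_le
  have : 2 / 3 ≤ t / h := by rw [le_div_iff₀ hh]; linarith
  linarith

lemma prof_abs (h t : ℝ) : |prof h t| ≤ 1 := by
  unfold prof
  rw [abs_of_nonneg (Real.smoothTransition.nonneg _)]
  exact Real.smoothTransition.le_one _

lemma prof_adm {h : ℝ} (hh : 0 < h) {c : V} (hc : c ∈ E) :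
    Adm E h (fun t => deriv (prof h) t • c) := by
  refine ⟨?_, fun t => E.smul_mem _ hc, fun t ht => ?_, fun t ht => ?_⟩
  · have h1 : ContDiff ℝ (⊤ : ℕ∞) (deriv (prof h)) := (prof_smooth h).deriv'
    exact h1.smul contDiff_const
  · have : prof h =ᶠ[𝓝 t] fun _ => 0 := by
      filter_upwards [Iio_mem_nhds (show t < h / 3 by linarith)] with s hs
      exact prof_left hh (le_of_lt (mem_Iio.mp hs))
    rw [this.deriv_eq]; simp
  · have : prof h =ᶠ[𝓝 t] fun _ => 1 := by
      filter_upwards [Ioi_mem_nhds (show 2 * h / 3 < t by linarith)] with s hs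
      exact prof_right hh (le_of_lt (mem_Ioi.mp hs))
    rw [this.deriv_eq]; simp

/-- jump estimate -/
lemma Nice.jump {g : V → V} {K : ℝ≥0} {M : ℝ} (hg : Nice g K M) {z u : ℝ → V} {S h : ℝ} (c : V)
    (hh : 0 < h) (hu : ∀ t, S ≤ t → u t = deriv (prof h) (t - S) • c)
    (hz : ∀ t, HasDerivAt z (g (z t) + u t) t) :
    ∀ t ∈ Icc S (S + h), ‖z t - z S - prof h (t - S) • c‖ ≤ M * h := by
  intro t ht
  have hd : ∀ s ∈ Icc S (S + h), HasDerivWithinAt (fun t => z t - prof h (t - S) • c) (g (z s))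
      (Icc S (S + h)) s := by
    intro s hs
    have h1 : HasDerivAt (fun t => prof h (t - S)) (deriv (prof h) (s - S)) s :=
      HasDerivAt.comp_sub_const s S
        (((prof_smooth h).differentiable (by simp)) (s - S)).hasDerivAt
    have h2 := (hz s).sub (h1.smul_const c)
    rw [hu s hs.1, add_sub_cancel_right] at h2
    exact h2.hasDerivWithinAt
  have := norm_image_sub_le_of_norm_deriv_le_segment' hd (fun s _ => hg.bd _) t ht
  simp only [sub_self] at this
  rw [prof_left hh (t := 0) (by positivity), zero_smul, sub_zero] at this
  have hM : 0 ≤ M := (norm_nonneg _).trans (hg.bd 0)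
  calc _ = ‖z t - prof h (t - S) • c - z S‖ := by congr 1; abel
    _ ≤ _ := this
    _ ≤ M * h := by gcongr; linarith [ht.2]

lemma R.jump (hf : ContDiff ℝ (⊤ : ℕ∞) f) (x : V) {c : V} (hc : c ∈ E) {ε : ℝ} (hε : 0 < ε) :
    ∃ y, dist y (x + c) < ε ∧ R f E x y := by
  obtain ⟨χ, g, K, M, hg, -, hgf⟩ := trunc hf (r := ‖x‖ + ‖c‖ + 1) (by positivity)
  have hM : 0 ≤ M := (norm_nonneg _).trans (hg.bd 0)
  set h : ℝ := min ε 1 / (M + 1) with hh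
  have hh0 : 0 < h := by positivity
  have hMh : M * h < min ε 1 := by
    rw [hh, mul_div_assoc', div_lt_iff₀ (by positivity)]
    have : 0 < min ε 1 := by positivity
    nlinarith
  have hadm := prof_adm (E := E) hh0 hc
  obtain ⟨z, a1, a2⟩ := hg.sol hadm.smooth.continuous x
  have hj := hg.jump (S := 0) (h := h) c hh0 (fun t _ => by simp) a2
  simp only [sub_zero, zero_add, a1] at hj
  refine ⟨z h, ?_, h, hh0, _, hadm, z, a1, fun t ht => ?_, rfl⟩
  · have := hj h ⟨hh0.le, le_rfl⟩
    rw [prof_right hh0 (by linarith), one_smul] at this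
    rw [dist_eq_norm, ← sub_sub]
    exact (this.trans_lt hMh).trans_le (min_le_left _ _)
  · rw [← hgf (z t)]
    · exact a2 t
    · rw [mem_closedBall_zero_iff]
      have h1 := ((hj t ht).trans_lt hMh).trans_le (min_le_right _ _)
      have h2 : ‖prof h t • c‖ ≤ ‖c‖ := by
        rw [norm_smul, Real.norm_eq_abs]
        exact mul_le_of_le_one_left (norm_nonneg _) (prof_abs _ _)
      have h3 : ‖z t‖ ≤ ‖z t - x - prof h t • c‖ + ‖x‖ + ‖prof h t • c‖ := by
        have h4 := norm_add₃_le (a := z t - x - prof h t • c) (b := x) (c := prof h t • c)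
        have h5 : z t - x - prof h t • c + x + prof h t • c = z t := by abel
        rwa [h5] at h4
      linarith

end Reach

end CC

open Set Filter Metric NNReal

namespace CC

set_option linter.unusedSectionVars false

section Lie
variable {V : Type*} [NormedAddCommGroup V] [NormedSpace ℝ V] {ι : Type*}

/-- the ideal generated by the constant fields -/
inductive LL (f : V → V) (e : ι → V) : (V → V) → Prop
  | zero : LL f e (fun _ => 0)
  | base (i : ι) : LL f e (fun _ => e i)
  | add (Y Z : V → V) (hY : LL f e Y) (hZ : LL f e Z) : LL f e (fun x => Y x + Z x)
  | smul (c : ℝ) (Y : V → V) (hY : LL f e Y) : LL f e (fun x => c • Y x)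
  | stepf (Y : V → V) (hY : LL f e Y) : LL f e (lieBracket f Y)
  | stepe (j : ι) (Y : V → V) (hY : LL f e Y) : LL f e (lieBracket (fun _ => e j) Y)

variable {f : V → V} {e : ι → V}

lemma smooth_bracket {X Y : V → V} (hX : ContDiff ℝ (⊤ : ℕ∞) X) (hY : ContDiff ℝ (⊤ : ℕ∞) Y) :
    ContDiff ℝ (⊤ : ℕ∞) (lieBracket X Y) := by
  unfold lieBracket
  have h1 : ContDiff ℝ (⊤ : ℕ∞) (fderiv ℝ X) := hX.fderiv_right (by simp)
  have h2 : ContDiff ℝ (⊤ : ℕ∞) (fderiv ℝ Y) := hY.fderiv_right (by simp)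
  exact (h2.clm_apply hX).sub (h1.clm_apply hY)

lemma LL.smooth (hf : ContDiff ℝ (⊤ : ℕ∞) f) {Y : V → V} (hY : LL f e Y) :
    ContDiff ℝ (⊤ : ℕ∞) Y := by
  induction hY with
  | zero => exact contDiff_const
  | base i => exact contDiff_const
  | add Y Z _ _ h1 h2 => exact h1.add h2
  | smul c Y _ h => exact contDiff_const.smul h
  | stepf Y _ h => exact smooth_bracket hf h
  | stepe j Y _ h => exact smooth_bracket contDiff_const h

lemma LL.sub {Y Z : V → V} (hY : LL f e Y) (hZ : LL f e Z) : LL f e (fun x => Y x - Z x) := by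
  have := hY.add _ _ (hZ.smul (-1))
  simpa [sub_eq_add_neg] using this

lemma LL.neg {Y : V → V} (hY : LL f e Y) : LL f e (fun x => - Y x) := by
  simpa using hY.smul (-1)

lemma lb_eq (X Y : V → V) : lieBracket X Y = VectorField.lieBracket ℝ X Y := rfl

lemma jacobi {X Y Z : V → V} (hX : ContDiff ℝ (⊤ : ℕ∞) X) (hY : ContDiff ℝ (⊤ : ℕ∞) Y)
    (hZ : ContDiff ℝ (⊤ : ℕ∞) Z) : lieBracket (lieBracket X Y) Z =
      fun x => lieBracket X (lieBracket Y Z) x - lieBracket Y (lieBracket X Z) x := by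
  funext x
  have h : minSmoothness ℝ 2 ≤ (((⊤ : ℕ∞) : WithTop ℕ∞)) := by
    simp only [minSmoothness_of_isRCLikeNormedField]
    exact (WithTop.coe_le_coe.mpr (le_top : (2 : ℕ∞) ≤ ⊤))
  have := VectorField.leibniz_identity_lieBracket (𝕜 := ℝ) (n := ((⊤ : ℕ∞) : WithTop ℕ∞)) h
    hX.contDiffAt hY.contDiffAt hZ.contDiffAt (x := x)
  simp only [lb_eq]
  rw [this]; abel

lemma LL.bracket (hf : ContDiff ℝ (⊤ : ℕ∞) f) {Y : V → V} (hY : LL f e Y) :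
    ∀ Z, LL f e Z → LL f e (lieBracket Y Z) := by
  induction hY with
  | zero => 
    intro Z hZ
    have : lieBracket (fun _ => (0 : V)) Z = fun _ => 0 := by
      funext x; simp [lieBracket]
    rw [this]; exact .zero
  | base i => exact fun Z hZ => hZ.stepe i
  | add Y Y' h h' h1 h2 =>
    intro Z hZ
    have : lieBracket (fun x => Y x + Y' x) Z = fun x => lieBracket Y Z x + lieBracket Y' Z x := by
      funext x
      have a1 := ((h.smooth hf).differentiable (by simp)) x
      have a2 := ((h'.smooth hf).differentiable (by simp)) x
      simp only [lieBracket]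
      rw [fderiv_fun_add a1 a2, map_add, add_apply]; abel
    rw [this]; exact (h1 Z hZ).add _ _ (h2 Z hZ)
  | smul c Y h h1 =>
    intro Z hZ
    have : lieBracket (fun x => c • Y x) Z = fun x => c • lieBracket Y Z x := by
      funext x
      have a1 := ((h.smooth hf).differentiable (by simp)) x
      simp only [lieBracket]
      rw [fderiv_fun_const_smul a1, map_smul, smul_apply, smul_sub]
    rw [this]; exact (h1 Z hZ).smul c
  | stepf Y h h1 =>
    intro Z hZ
    rw [jacobi hf (h.smooth hf) (hZ.smooth hf)]
    exact (h1 Z hZ).stepf.sub (h1 _ hZ.stepf)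
  | stepe j Y h h1 =>
    intro Z hZ
    rw [jacobi contDiff_const (h.smooth hf) (hZ.smooth hf)]
    exact ((h1 Z hZ).stepe j).sub (h1 _ (hZ.stepe j))

lemma lift_bracket {A B : V → V} (hA : Differentiable ℝ A) (hB : Differentiable ℝ B) (a b : ℝ) :
    lieBracket (fun q : V × ℝ => (A q.1, a)) (fun q : V × ℝ => (B q.1, b)) =
      fun q => (lieBracket A B q.1, 0) := by
  have key : ∀ (A : V → V) (a : ℝ), Differentiable ℝ A → ∀ q w : V × ℝ,
      fderiv ℝ (fun q : V × ℝ => (A q.1, a)) q w = (fderiv ℝ A q.1 w.1, 0) := by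
    intro A a hA q w
    have h1 : HasFDerivAt (fun q : V × ℝ => A q.1)
        ((fderiv ℝ A q.1).comp (ContinuousLinearMap.fst ℝ V ℝ)) q :=
      (hA q.1).hasFDerivAt.comp q hasFDerivAt_fst
    have h2 := h1.prodMk (hasFDerivAt_const a q)
    rw [h2.fderiv]; simp
  funext q
  simp only [lieBracket, key A a hA, key B b hB, Prod.mk_sub_mk, sub_self]

lemma LL.of_gen (hf : ContDiff ℝ (⊤ : ℕ∞) f) {X : V × ℝ → V × ℝ}
    (hX : LieGen ({fun q : V × ℝ => (f q.1, (1 : ℝ))} ∪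
          Set.range (fun i : ι => fun _ : V × ℝ => (e i, (0 : ℝ)))) X) :
    X = (fun q : V × ℝ => (f q.1, (1 : ℝ))) ∨ ∃ Y, LL f e Y ∧ X = fun q => (Y q.1, 0) := by
  have hfd : Differentiable ℝ f := hf.differentiable (by simp)
  induction hX with
  | base X hX =>
    rcases hX with hX | ⟨i, rfl⟩
    · exact .inl hX
    · exact .inr ⟨_, .base i, rfl⟩
  | bracket X Y _ _ h1 h2 =>
    right
    rcases h1 with rfl | ⟨A, hA, rfl⟩ <;> rcases h2 with rfl | ⟨B, hB, rfl⟩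
    · refine ⟨_, .zero, ?_⟩
      funext q; simp only [lieBracket, sub_self]; rfl
    · rw [lift_bracket hfd ((hB.smooth hf).differentiable (by simp))]
      exact ⟨_, hB.stepf, rfl⟩
    · rw [lift_bracket ((hA.smooth hf).differentiable (by simp)) hfd]
      refine ⟨_, hA.stepf.neg, ?_⟩
      funext q; simp [lieBracket]
    · rw [lift_bracket ((hA.smooth hf).differentiable (by simp))
        ((hB.smooth hf).differentiable (by simp))]
      exact ⟨_, hA.bracket hf _ hB, rfl⟩

lemma LL.span (hf : ContDiff ℝ (⊤ : ℕ∞) f)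
    (hH : ∀ p : V × ℝ, Submodule.span ℝ {v : V × ℝ | ∃ X : V × ℝ → V × ℝ,
        LieGen ({fun q : V × ℝ => (f q.1, (1 : ℝ))} ∪
          Set.range (fun i : ι => fun _ : V × ℝ => (e i, (0 : ℝ)))) X ∧
        X p = v} = ⊤) (p v : V) : ∃ Y, LL f e Y ∧ Y p = v := by
  have key : ∀ w : V × ℝ, ∃ (c : ℝ) (Y : V → V), LL f e Y ∧ w = (c • f p + Y p, c) := by
    intro w
    have hw : w ∈ (⊤ : Submodule ℝ (V × ℝ)) := trivial
    rw [← hH (p, 0)] at hw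
    induction hw using Submodule.span_induction with
    | mem x hx =>
      obtain ⟨X, hX, rfl⟩ := hx
      rcases LL.of_gen hf hX with rfl | ⟨Y, hY, rfl⟩
      · exact ⟨1, _, .zero, by simp⟩
      · exact ⟨0, _, hY, by simp⟩
    | zero => exact ⟨0, _, .zero, by simp only [zero_smul, add_zero]; rfl⟩
    | add x y _ _ h1 h2 =>
      obtain ⟨c, Y, hY, rfl⟩ := h1
      obtain ⟨d, Z, hZ, rfl⟩ := h2
      refine ⟨c + d, _, hY.add _ _ hZ, ?_⟩
      ext1
      · simp [add_smul]; abel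
      · simp
    | smul a x _ h =>
      obtain ⟨c, Y, hY, rfl⟩ := h
      exact ⟨a * c, _, hY.smul a, by ext1 <;> simp [mul_smul]⟩
  obtain ⟨c, Y, hY, h⟩ := key (v, 0)
  obtain ⟨h1, h2⟩ := Prod.mk.inj h
  subst h2
  exact ⟨Y, hY, by simp [h1]⟩

lemma LL.rev {Y : V → V} (hY : LL f e Y) : LL (fun x => - f x) e Y := by
  induction hY with
  | zero => exact .zero
  | base i => exact .base i
  | add Y Z _ _ h1 h2 => exact h1.add _ _ h2
  | smul c Y _ h => exact h.smul c
  | stepf Y _ h =>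
    have : lieBracket f Y = fun x => - lieBracket (fun x => - f x) Y x := by
      funext x
      simp only [lieBracket, fderiv_fun_neg, map_neg, neg_apply]; abel
    rw [this]; exact h.stepf.neg
  | stepe j Y _ h => exact h.stepe j

end Lie

end CC

open Set Filter Metric NNReal

namespace CC

set_option linter.unusedSectionVars false

section Good
variable {V : Type*} [NormedAddCommGroup V] [NormedSpace ℝ V] [FiniteDimensional ℝ V] {ι : Type*}
variable {f g : V → V} {K : ℝ≥0} {M r : ℝ} {E : Submodule ℝ V} {x : V} {e : ι → V}

structure Good (g : V → V) (E : Submodule ℝ V) (x : V) (r T : ℝ) (u z : ℝ → V)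
    (Ψ : ℝ → V →L[ℝ] V) : Prop where
  hT : 0 ≤ T
  adm : Adm E T u
  z0 : z 0 = x
  dz : ∀ t, HasDerivAt z (g (z t) + u t) t
  Ψ0 : Ψ 0 = ContinuousLinearMap.id ℝ V
  dΨ : ∀ t, HasDerivAt Ψ (-((Ψ t).comp (fderiv ℝ g (z t)))) t
  ball : ∀ t ∈ Icc 0 T, ‖z t‖ < r

/-- span of the pulled back control directions -/
def PP (e : ι → V) (T : ℝ) (Ψ : ℝ → V →L[ℝ] V) : Submodule ℝ V :=
  Submodule.span ℝ {w | ∃ t ∈ Icc 0 T, ∃ i, w = Ψ t (e i)}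

lemma Good.ext_time {T : ℝ} {u z : ℝ → V} {Ψ : ℝ → V →L[ℝ] V} (h : Good g E x r T u z Ψ) :
    ∃ h₀ > 0, ∀ t ∈ Icc T (T + h₀), Good g E x r t u z Ψ := by
  have hc : ContinuousAt z T := (h.dz T).continuousAt
  have h1 : ∀ᶠ t in 𝓝 T, ‖z t‖ < r :=
    (hc.norm).eventually (gt_mem_nhds (h.ball T ⟨h.hT, le_rfl⟩))
  obtain ⟨ε, hε, h2⟩ := Metric.eventually_nhds_iff.mp h1
  refine ⟨ε / 2, by positivity, fun t ht => ⟨h.hT.trans ht.1, ⟨h.adm.smooth, h.adm.mem, h.adm.left,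
    fun s hs => h.adm.right s (ht.1.trans hs)⟩, h.z0, h.dz, h.Ψ0, h.dΨ, fun s hs => ?_⟩⟩
  by_cases hsT : s ≤ T
  · exact h.ball s ⟨hs.1, hsT⟩
  · push Not at hsT
    apply h2
    rw [Real.dist_eq, abs_of_pos (by linarith)]
    linarith [hs.2, ht.2]

lemma Nice.psi_unique (hg : Nice g K M) {z z' : ℝ → V} {Ψ Ψ' : ℝ → V →L[ℝ] V} {T : ℝ}
    (hz : ∀ t ∈ Icc 0 T, z t = z' t) (h0 : Ψ 0 = Ψ' 0)
    (h1 : ∀ t, HasDerivAt Ψ (-((Ψ t).comp (fderiv ℝ g (z t)))) t)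
    (h2 : ∀ t, HasDerivAt Ψ' (-((Ψ' t).comp (fderiv ℝ g (z' t)))) t) :
    ∀ t ∈ Icc 0 T, Ψ t = Ψ' t := by
  intro t ht
  have := gron (ρ := fun t => Ψ t - Ψ' t) (K := K) (δ := 0) (ε := 0) (T := T)
    K.coe_nonneg le_rfl le_rfl (fun t _ => (h1 t).sub (h2 t)) (by simp [h0])
    (fun t ht => by
      rw [hz t ht, add_zero, ← norm_neg, neg_sub, sub_neg_eq_add, add_comm, ← sub_eq_add_neg,
        ← ContinuousLinearMap.sub_comp, mul_comm]
      refine (ContinuousLinearMap.opNorm_comp_le _ _).trans ?_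
      gcongr
      exact hg.dbd _) t ht
  simp only [zero_mul, add_zero] at this
  exact sub_eq_zero.mp (norm_le_zero_iff.mp this)

lemma Nice.psi_bound (hg : Nice g K M) {z : ℝ → V} {Ψ : ℝ → V →L[ℝ] V} {T : ℝ}
    (h0 : Ψ 0 = ContinuousLinearMap.id ℝ V)
    (h1 : ∀ t, HasDerivAt Ψ (-((Ψ t).comp (fderiv ℝ g (z t)))) t) :
    ∀ t ∈ Icc 0 T, ‖Ψ t‖ ≤ Real.exp (K * T) := by
  intro t ht
  have := gron (ρ := Ψ) (K := K) (δ := 1) (ε := 0) (T := T)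
    K.coe_nonneg le_rfl zero_le_one (fun t _ => h1 t)
    (by rw [h0]; exact ContinuousLinearMap.norm_id_le)
    (fun t ht => by
      rw [add_zero, norm_neg, mul_comm]
      refine (ContinuousLinearMap.opNorm_comp_le _ _).trans ?_
      gcongr
      exact hg.dbd _) t ht
  simpa using this

lemma Good.ext_jump (hg : Nice g K M) {T : ℝ} {u z : ℝ → V} {Ψ : ℝ → V →L[ℝ] V}
    (h : Good g E x r T u z Ψ) {c : V} (hc : c ∈ E) (hr : ‖z T‖ + ‖c‖ < r) {ε : ℝ} (hε : 0 < ε) :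
    ∃ T' u' z' Ψ', Good g E x r T' u' z' Ψ' ∧ T ≤ T' ∧ (∀ t ∈ Icc 0 T, Ψ' t = Ψ t) ∧
      ‖z' T' - (z T + c)‖ < ε ∧ ‖Ψ' T' - Ψ T‖ < ε := by
  have hM : 0 ≤ M := (norm_nonneg _).trans (hg.bd 0)
  set ρ := r - (‖z T‖ + ‖c‖) with hρ
  have hρ0 : 0 < ρ := by linarith
  set B : ℝ := K * Real.exp (K * (T + 1)) with hB
  have hB0 : 0 ≤ B := by positivity
  set h₁ : ℝ := min (min ε ρ) 1 / (M + B + 1) with hh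
  have hm : 0 < min (min ε ρ) 1 := by positivity
  have hh0 : 0 < h₁ := by positivity
  have hle : h₁ * (M + B + 1) = min (min ε ρ) 1 := by
    rw [hh]; field_simp
  have a1 : M * h₁ < min (min ε ρ) 1 := by nlinarith
  have a2 : B * h₁ < min (min ε ρ) 1 := by nlinarith
  have a3 : h₁ ≤ 1 := by nlinarith [min_le_right (min ε ρ) 1, mul_nonneg hM hh0.le, mul_nonneg hB0 hh0.le]
  have hmε : min (min ε ρ) 1 ≤ ε := (min_le_left _ _).trans (min_le_left _ _)
  have hmρ : min (min ε ρ) 1 ≤ ρ := (min_le_left _ _).trans (min_le_right _ _)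
  have hadm := prof_adm (E := E) hh0 hc
  set u' : ℝ → V := fun t => u t + deriv (prof h₁) (t - T) • c with hu'
  have hadm' : Adm E (T + h₁) u' := by
    refine ⟨?_, ?_, ?_, ?_⟩
    · exact h.adm.smooth.add (hadm.smooth.comp (contDiff_id.sub contDiff_const))
    · exact fun t => E.add_mem (h.adm.mem _) (hadm.mem _)
    · intro t ht
      have := hadm.left (t - T) (by linarith [h.hT])
      rw [hu']; simp only
      rw [h.adm.left t ht, this, add_zero]
    · intro t ht
      have := hadm.right (t - T) (by linarith [h.hT])
      rw [hu']; simp only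
      rw [h.adm.right t (by linarith), this, add_zero]
  obtain ⟨z', b1, b2⟩ := hg.sol hadm'.smooth.continuous x
  have hzc : Continuous z' := continuous_iff_continuousAt.mpr fun t => (b2 t).continuousAt
  obtain ⟨Ψ', c1, c2⟩ := hg.exPsi hzc
  have huu : ∀ t ∈ Icc 0 T, u' t = u t := by
    intro t ht
    have := hadm.left (t - T) (by linarith [ht.2])
    rw [hu']; simp only
    rw [this, add_zero]
  have hzz : ∀ t ∈ Icc 0 T, z' t = z t :=
    hg.unique (by rw [b1, h.z0]) huu (fun t _ => b2 t) (fun t _ => h.dz t)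
  have hΨΨ : ∀ t ∈ Icc 0 T, Ψ' t = Ψ t :=
    hg.psi_unique hzz (by rw [c1, h.Ψ0]) c2 h.dΨ
  have hTT : T ∈ Icc 0 T := ⟨h.hT, le_rfl⟩
  have hj := hg.jump (S := T) (h := h₁) c hh0 (fun t ht => by
    rw [hu']; simp only
    rw [h.adm.right t ht, zero_add]) b2
  rw [hzz T hTT] at hj
  refine ⟨T + h₁, u', z', Ψ', ⟨by linarith [h.hT], hadm', b1, b2, c1, c2, ?_⟩, by linarith, hΨΨ,
    ?_, ?_⟩
  · intro t ht
    by_cases htT : t ≤ T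
    · rw [hzz t ⟨ht.1, htT⟩]; exact h.ball t ⟨ht.1, htT⟩
    · have h1 := (hj t ⟨(not_le.mp htT).le, ht.2⟩).trans_lt a1
      have h2 : ‖prof h₁ (t - T) • c‖ ≤ ‖c‖ := by
        rw [norm_smul, Real.norm_eq_abs]
        exact mul_le_of_le_one_left (norm_nonneg _) (prof_abs _ _)
      have h4 := norm_add₃_le (a := z' t - z T - prof h₁ (t - T) • c) (b := z T)
        (c := prof h₁ (t - T) • c)
      have h5 : z' t - z T - prof h₁ (t - T) • c + z T + prof h₁ (t - T) • c = z' t := by abel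
      rw [h5] at h4
      linarith
  · have := hj (T + h₁) ⟨by linarith, le_rfl⟩
    rw [prof_right hh0 (by linarith), one_smul, sub_sub] at this
    linarith
  · rw [← hΨΨ T hTT]
    have := norm_image_sub_le_of_norm_deriv_le_segment' (f := Ψ') (a := T) (b := T + h₁) (C := B)
      (fun t _ => (c2 t).hasDerivWithinAt) (fun t ht => by
        rw [norm_neg]
        refine (ContinuousLinearMap.opNorm_comp_le _ _).trans ?_
        rw [hB, mul_comm]
        gcongr
        · exact hg.dbd _
        · exact hg.psi_bound c1 c2 t ⟨h.hT.trans ht.1, by linarith [ht.2]⟩) (T + h₁)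
        ⟨by linarith, le_rfl⟩
    rw [add_sub_cancel_left] at this
    linarith

lemma right_deriv_mem {Q : Submodule ℝ V} {φ : ℝ → V} {v : V} {a h : ℝ} (hh : 0 < h)
    (hφ : HasDerivAt φ v a) (hm : ∀ t ∈ Icc a (a + h), φ t ∈ Q) : v ∈ Q := by
  have h1 := hasDerivWithinAt_iff_tendsto_slope.mp (hφ.hasDerivWithinAt (s := Ioi a))
  have hcl : IsClosed (Q : Set V) := Q.closed_of_finiteDimensional
  have hE : Ioi a \ {a} = Ioi a := by
    ext t; simp only [Set.mem_sdiff, mem_Ioi, mem_singleton_iff]; exact ⟨fun h => h.1, fun h => ⟨h, h.ne'⟩⟩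
  rw [hE] at h1
  refine hcl.mem_of_tendsto h1 ?_
  filter_upwards [Ioc_mem_nhdsGT (show a < a + h by linarith)] with t ht
  rw [slope_def_module]
  exact Q.smul_mem _ (Q.sub_mem (hm t ⟨ht.1.le, ht.2⟩) (hm a ⟨le_rfl, by linarith⟩))

lemma PP_mono {T T' : ℝ} {Ψ Ψ' : ℝ → V →L[ℝ] V} (hT : T ≤ T') (h : ∀ t ∈ Icc 0 T, Ψ' t = Ψ t) :
    PP e T Ψ ≤ PP e T' Ψ' := by
  refine Submodule.span_mono ?_
  rintro w ⟨t, ht, i, rfl⟩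
  exact ⟨t, ⟨ht.1, ht.2.trans hT⟩, i, by rw [h t ht]⟩

lemma Good.LL_mem (hg : Nice g K M) (hf : ContDiff ℝ (⊤ : ℕ∞) f)
    (hgf : ∀ y ∈ closedBall (0 : V) r, g y = f y) (he : ∀ i, e i ∈ E) {Q : Submodule ℝ V}
    (hQ : ∀ T u z Ψ, Good g E x r T u z Ψ → Module.finrank ℝ (PP e T Ψ) ≤ Module.finrank ℝ Q)
    {Y : V → V} (hY : LL f e Y) : ∀ T u z Ψ, Good g E x r T u z Ψ → PP e T Ψ = Q →
      Ψ T (Y (z T)) ∈ Q := by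
  have hext : ∀ {T u z Ψ T' u' z' Ψ'}, Good g E x r T u z Ψ → PP e T Ψ = Q →
      Good g E x r T' u' z' Ψ' → T ≤ T' → (∀ t ∈ Icc 0 T, Ψ' t = Ψ t) → PP e T' Ψ' = Q := by
    intro T u z Ψ T' u' z' Ψ' h hP h' hT hΨ
    rw [← hP]
    symm
    refine Submodule.eq_of_le_of_finrank_le (PP_mono hT hΨ) ?_
    rw [hP]; exact hQ _ _ _ _ h'
  induction hY with
  | zero => intros; simp
  | base i =>
    intro T u z Ψ h hP
    rw [← hP]
    exact Submodule.subset_span ⟨T, ⟨h.hT, le_rfl⟩, i, rfl⟩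
  | add Y Z _ _ h1 h2 =>
    intro T u z Ψ h hP
    rw [map_add]
    exact Q.add_mem (h1 _ _ _ _ h hP) (h2 _ _ _ _ h hP)
  | smul c Y _ h1 =>
    intro T u z Ψ h hP
    rw [map_smul]
    exact Q.smul_mem _ (h1 _ _ _ _ h hP)
  | stepf Y hY h1 =>
    intro T u z Ψ h hP
    obtain ⟨h₀, hh₀, h2⟩ := h.ext_time
    have hb := h.ball T ⟨h.hT, le_rfl⟩
    have hd : HasDerivAt (fun t => Y (z t)) (fderiv ℝ Y (z T) (g (z T) + u T)) T :=
      (((hY.smooth hf).differentiable (by simp)) (z T)).hasFDerivAt.comp_hasDerivAt T (h.dz T)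
    have hd2 := (h.dΨ T).clm_apply hd
    have hge : g =ᶠ[𝓝 (z T)] f := by
      filter_upwards [isOpen_ball.mem_nhds (mem_ball_zero_iff.mpr hb)] with y hy
      exact hgf y (ball_subset_closedBall hy)
    have := right_deriv_mem hh₀ hd2 (fun t ht => h1 _ _ _ _ (h2 t ht)
      (hext h hP (h2 t ht) ht.1 (fun _ _ => rfl)))
    rw [h.adm.right T le_rfl, add_zero, hge.fderiv_eq, hge.eq_of_nhds] at this
    convert this using 1
    simp only [lieBracket, map_sub, neg_apply, ContinuousLinearMap.comp_apply]
    abel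
  | stepe j Y hY h1 =>
    intro T u z Ψ h hP
    have hb := h.ball T ⟨h.hT, le_rfl⟩
    have hYd := (hY.smooth hf).differentiable (by simp)
    obtain ⟨s₀, hs₀, hs⟩ : ∃ s₀ > 0, ‖z T‖ + s₀ * ‖e j‖ < r := by
      refine ⟨(r - ‖z T‖) / (‖e j‖ + 1), by have := norm_nonneg (e j); apply div_pos <;> linarith, ?_⟩
      have : (r - ‖z T‖) / (‖e j‖ + 1) * ‖e j‖ < (r - ‖z T‖) := by
        rw [div_mul_eq_mul_div, div_lt_iff₀ (by positivity)]
        nlinarith [norm_nonneg (e j)]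
      linarith
    have key : ∀ s ∈ Icc (0 : ℝ) (0 + s₀), Ψ T (Y (z T + s • e j)) ∈ Q := by
      intro s hs'
      have hcl : IsClosed (Q : Set V) := Q.closed_of_finiteDimensional
      rw [← SetLike.mem_coe, ← hcl.closure_eq, Metric.mem_closure_iff]
      intro ε hε
      have hcont : Continuous fun p : (V →L[ℝ] V) × V => p.1 (Y p.2) :=
        continuous_fst.clm_apply (hYd.continuous.comp continuous_snd)
      obtain ⟨δ, hδ, h3⟩ := Metric.continuous_iff.mp hcont (Ψ T, z T + s • e j) ε hε
      obtain ⟨T', u', z', Ψ', k1, k2, k3, k4, k5⟩ := h.ext_jump hg (c := s • e j)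
        (E.smul_mem _ (he j)) (by
          rw [norm_smul, Real.norm_eq_abs, abs_of_nonneg hs'.1]
          have := mul_le_mul_of_nonneg_right hs'.2 (norm_nonneg (e j))
          rw [zero_add] at this
          linarith) hδ
      refine ⟨_, h1 _ _ _ _ k1 (hext h hP k1 k2 k3), ?_⟩
      rw [dist_comm]
      refine h3 (Ψ' T', z' T') ?_
      rw [Prod.dist_eq, dist_eq_norm, dist_eq_norm]
      exact max_lt k5 k4
    have hd : HasDerivAt (fun s : ℝ => z T + s • e j) (e j) 0 := by
      simpa using ((hasDerivAt_id (0 : ℝ)).smul_const (e j)).const_add (z T)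
    have hd1 : HasDerivAt (fun s : ℝ => Y (z T + s • e j)) (fderiv ℝ Y (z T) (e j)) 0 := by
      have h5 : HasFDerivAt Y (fderiv ℝ Y (z T)) (z T + (0 : ℝ) • e j) := by
        simpa using (hYd (z T)).hasFDerivAt
      exact h5.comp_hasDerivAt (0 : ℝ) hd
    have hd2 : HasDerivAt (fun s : ℝ => Ψ T (Y (z T + s • e j))) (Ψ T (fderiv ℝ Y (z T) (e j))) 0 :=
      (Ψ T).hasFDerivAt.comp_hasDerivAt (0 : ℝ) hd1
    have := right_deriv_mem hs₀ hd2 key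
    simpa [lieBracket] using this

end Good

end CC

open Set Filter Metric NNReal

namespace CC

set_option linter.unusedSectionVars false

section Access
variable {V : Type*} [NormedAddCommGroup V] [NormedSpace ℝ V] [FiniteDimensional ℝ V] {ι : Type*}
variable {f g : V → V} {K : ℝ≥0} {M r : ℝ} {E : Submodule ℝ V} {x : V} {e : ι → V}

lemma Adm.add {T : ℝ} {u v : ℝ → V} (hu : Adm E T u) (hv : Adm E T v) :
    Adm E T (fun t => u t + v t) :=
  ⟨hu.smooth.add hv.smooth, fun t => E.add_mem (hu.mem t) (hv.mem t),
    fun t ht => by rw [hu.left t ht, hv.left t ht, add_zero],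
    fun t ht => by rw [hu.right t ht, hv.right t ht, add_zero]⟩

lemma Adm.smul {T : ℝ} {u : ℝ → V} (hu : Adm E T u) (c : ℝ) :
    Adm E T (fun t => c • u t) :=
  ⟨contDiff_const.smul hu.smooth, fun t => E.smul_mem c (hu.mem t),
    fun t ht => by rw [hu.left t ht, smul_zero],
    fun t ht => by rw [hu.right t ht, smul_zero]⟩

lemma gram_full {T : ℝ} (hT : 0 < T) {Ψ : ℝ → V →L[ℝ] V} (hΨ : Continuous Ψ) (he : ∀ i, e i ∈ E)
    (hP : PP e T Ψ = ⊤) (w : V) : ∃ v, Adm E T v ∧ ∫ t in (0 : ℝ)..T, Ψ t (v t) = w := by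
  have hint : ∀ v, Adm E T v → IntervalIntegrable (fun t => Ψ t (v t)) MeasureTheory.volume 0 T :=
    fun v hv => (hΨ.clm_apply hv.smooth.continuous).intervalIntegrable _ _
  let S : Submodule ℝ V :=
    { carrier := {w | ∃ v, Adm E T v ∧ ∫ t in (0 : ℝ)..T, Ψ t (v t) = w}
      add_mem' := by
        rintro a b ⟨u, hu, rfl⟩ ⟨v, hv, rfl⟩
        refine ⟨_, hu.add hv, ?_⟩
        simp only [map_add]
        exact intervalIntegral.integral_add (hint u hu) (hint v hv)
      zero_mem' := ⟨_, Adm.zero E T, by simp⟩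
      smul_mem' := by
        rintro c a ⟨u, hu, rfl⟩
        refine ⟨_, hu.smul c, ?_⟩
        simp only [map_smul]
        exact intervalIntegral.integral_smul _ _ }
  suffices hS : S = ⊤ by
    have : w ∈ S := hS ▸ Submodule.mem_top
    exact this
  by_contra hS
  obtain ⟨ℓ, hℓ, hle⟩ := Submodule.exists_le_ker_of_lt_top S (lt_top_iff_ne_top.mpr hS)
  apply hℓ
  let l : V →L[ℝ] ℝ := LinearMap.toContinuousLinearMap ℓ
  have hl : ∀ v, l v = ℓ v := fun v => rfl
  have hc : ∀ i, Continuous fun t => l (Ψ t (e i)) := fun i =>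
    l.continuous.comp (hΨ.clm_apply continuous_const)
  have key : ∀ i, ∀ t ∈ Icc 0 T, l (Ψ t (e i)) = 0 := by
    intro i
    have h1 : ∀ᵐ t, t ∈ Ioo 0 T → l (Ψ t (e i)) = 0 := by
      refine isOpen_Ioo.ae_eq_zero_of_integral_contDiff_smul_eq_zero
        ((hc i).locallyIntegrable.locallyIntegrableOn _) ?_
      intro φ hφ _ hs
      have hφ0 : ∀ t, t ∉ Ioo 0 T → φ t = 0 := fun t ht =>
        image_eq_zero_of_notMem_tsupport fun h => ht (hs h)
      have hadm : Adm E T (fun t => φ t • e i) :=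
        ⟨hφ.smul contDiff_const, fun t => E.smul_mem _ (he i),
          fun t ht => by rw [hφ0 t (fun h => by linarith [h.1]), zero_smul],
          fun t ht => by rw [hφ0 t (fun h => by linarith [h.2]), zero_smul]⟩
      have h2 : (∫ t in (0 : ℝ)..T, Ψ t (φ t • e i)) ∈ S := ⟨_, hadm, rfl⟩
      have h3 := hle h2
      rw [LinearMap.mem_ker, ← hl, ← l.intervalIntegral_comp_comm (hint _ hadm)] at h3
      rw [← intervalIntegral.integral_eq_integral_of_support_subset (a := 0) (b := T)]
      · simpa only [map_smul] using h3
      · intro t ht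
        by_contra hn
        apply ht
        simp only
        rw [hφ0 t (fun h => hn ⟨h.1, h.2.le⟩), zero_smul]
    have h2 : EqOn (fun t => l (Ψ t (e i))) (fun _ => 0) (Ioo 0 T) := by
      refine MeasureTheory.Measure.eqOn_open_of_ae_eq (μ := MeasureTheory.volume) ?_ isOpen_Ioo
        (hc i).continuousOn continuousOn_const
      exact (MeasureTheory.ae_restrict_iff' measurableSet_Ioo).mpr h1
    have h3 := h2.closure (hc i) continuous_const
    rw [closure_Ioo hT.ne] at h3
    exact h3
  ext v
  have hv : v ∈ PP e T Ψ := hP ▸ Submodule.mem_top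
  have h4 : PP e T Ψ ≤ LinearMap.ker ℓ := by
    refine Submodule.span_le.mpr ?_
    rintro w ⟨t, ht, i, rfl⟩
    exact key i t ht
  exact h4 hv

lemma Nice.psi_xi (hg : Nice g K M) {z : ℝ → V} {Ψ : ℝ → V →L[ℝ] V} {Ξ Λ : ℝ → V →L[ℝ] V}
    (hΨ : ∀ t, HasDerivAt Ψ (-((Ψ t).comp (fderiv ℝ g (z t)))) t)
    (hΞ : ∀ t, HasDerivAt Ξ ((fderiv ℝ g (z t)).comp (Ξ t) + Λ t) t) (p : V) (t : ℝ) :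
    HasDerivAt (fun t => Ψ t (Ξ t p)) (Ψ t (Λ t p)) t := by
  have h1 : HasDerivAt (fun t => Ξ t p) (((fderiv ℝ g (z t)).comp (Ξ t) + Λ t) p) t := by
    simpa using (hΞ t).clm_apply (hasDerivAt_const t p)
  have h2 := (hΨ t).clm_apply h1
  convert h2 using 1
  simp

lemma Good.zcont {T : ℝ} {u z : ℝ → V} {Ψ : ℝ → V →L[ℝ] V} (h : Good g E x r T u z Ψ) :
    Continuous z := continuous_iff_continuousAt.mpr fun t => (h.dz t).continuousAt

lemma Good.Ψcont {T : ℝ} {u z : ℝ → V} {Ψ : ℝ → V →L[ℝ] V} (h : Good g E x r T u z Ψ) :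
    Continuous Ψ := continuous_iff_continuousAt.mpr fun t => (h.dΨ t).continuousAt

lemma exists_good (hg : Nice g K M) (hf : ContDiff ℝ (⊤ : ℕ∞) f)
    (hgf : ∀ y ∈ closedBall (0 : V) r, g y = f y) (he : ∀ i, e i ∈ E) (hx : ‖x‖ < r)
    (hL : ∀ p v : V, ∃ Y, LL f e Y ∧ Y p = v) :
    ∃ T u z Ψ, 0 < T ∧ Good g E x r T u z Ψ ∧ PP e T Ψ = ⊤ := by
  have hne : ∃ T u z Ψ, Good g E x r T u z Ψ := by
    obtain ⟨z, h1, h2⟩ := hg.sol (u := fun _ => (0 : V)) continuous_const x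
    obtain ⟨Ψ, h3, h4⟩ := hg.exPsi (z := z)
      (continuous_iff_continuousAt.mpr fun t => (h2 t).continuousAt)
    refine ⟨0, _, z, Ψ, le_rfl, Adm.zero E 0, h1, h2, h3, h4, ?_⟩
    intro t ht
    have : t = 0 := le_antisymm ht.2 ht.1
    rw [this, h1]; exact hx
  let S : Set ℕ := {n | ∃ T u z Ψ, Good g E x r T u z Ψ ∧ Module.finrank ℝ (PP e T Ψ) = n}
  have hSn : S.Nonempty := by
    obtain ⟨T, u, z, Ψ, h⟩ := hne
    exact ⟨_, T, u, z, Ψ, h, rfl⟩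
  have hSb : BddAbove S := by
    refine ⟨Module.finrank ℝ V, ?_⟩
    rintro n ⟨T, u, z, Ψ, h, rfl⟩
    exact Submodule.finrank_le _
  obtain ⟨T, u, z, Ψ, h, hd⟩ := Nat.sSup_mem hSn hSb
  have hQ : ∀ T' u' z' Ψ', Good g E x r T' u' z' Ψ' →
      Module.finrank ℝ (PP e T' Ψ') ≤ Module.finrank ℝ (PP e T Ψ) := by
    intro T' u' z' Ψ' h'
    rw [hd]
    exact le_csSup hSb ⟨T', u', z', Ψ', h', rfl⟩
  have htop : PP e T Ψ = ⊤ := by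
    rw [eq_top_iff]
    rintro v -
    obtain ⟨Φ, k1, k2⟩ := hg.exXi (P := V) (Λ := fun _ => 0) h.zcont continuous_const
      (ContinuousLinearMap.id ℝ V)
    have h5 : Ψ T (Φ T v) = v := by
      have h6 := is_const_of_deriv_eq_zero (f := fun t => Ψ t (Φ t v))
        (fun t => (hg.psi_xi h.dΨ k2 v t).differentiableAt)
        (fun t => by rw [(hg.psi_xi h.dΨ k2 v t).deriv]; simp) T 0
      simpa [k1, h.Ψ0] using h6
    obtain ⟨Y, hY, hYv⟩ := hL (z T) (Φ T v)
    have := Good.LL_mem hg hf hgf he hQ hY T u z Ψ h rfl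
    rwa [hYv, h5] at this
  obtain ⟨h₀, hh₀, h1⟩ := h.ext_time
  refine ⟨T + h₀, u, z, Ψ, by linarith [h.hT], h1 _ ⟨by linarith, le_rfl⟩, ?_⟩
  rw [eq_top_iff, ← htop]
  exact PP_mono (by linarith) (fun _ _ => rfl)

/-- accessibility -/
lemma access (hf : ContDiff ℝ (⊤ : ℕ∞) f) (he : ∀ i, e i ∈ E)
    (hL : ∀ p v : V, ∃ Y, LL f e Y ∧ Y p = v) (x : V) : ∃ y, {y | R f E x y} ∈ 𝓝 y := by
  obtain ⟨χ, g, K, M, hg, -, hgf⟩ := trunc hf (r := ‖x‖ + 1) (by positivity)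
  obtain ⟨T, u, z, Ψ, hT, h, hP⟩ := exists_good (x := x) hg hf hgf he (by linarith) hL
  refine ⟨z T, ?_⟩
  have hgr := gram_full hT h.Ψcont he hP
  let b := Module.finBasis ℝ V
  choose v hv hvb using fun j => hgr (b j)
  let Λ : ℝ → V →L[ℝ] V := fun t => ∑ j,
    (LinearMap.toContinuousLinearMap (b.coord j)).smulRight (v j t)
  have hΛa : ∀ t p, Λ t p = ∑ j, b.repr p j • v j t := by
    intro t p
    simp [Λ]
  have hΛ : Continuous Λ := by
    refine continuous_finsetSum _ fun j _ => ?_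
    exact (ContinuousLinearMap.smulRightL ℝ V V
      (LinearMap.toContinuousLinearMap (b.coord j))).continuous.comp (hv j).smooth.continuous
  have hadmΛ : ∀ p, Adm E T (fun t => u t + Λ t p) := by
    intro p
    refine h.adm.add ⟨?_, ?_, ?_, ?_⟩
    · simp only [hΛa]
      exact ContDiff.sum fun j _ => contDiff_const.smul (hv j).smooth
    · intro t; rw [hΛa]
      exact E.sum_mem fun j _ => E.smul_mem _ ((hv j).mem t)
    · intro t ht; rw [hΛa]
      exact Finset.sum_eq_zero fun j _ => by rw [(hv j).left t ht, smul_zero]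
    · intro t ht; rw [hΛa]
      exact Finset.sum_eq_zero fun j _ => by rw [(hv j).right t ht, smul_zero]
  have hex : ∀ p : V, ∃ zp : ℝ → V, zp 0 = x + (0 : V →L[ℝ] V) p ∧
      (∀ t, HasDerivAt zp (g (zp t) + (u t + Λ t p)) t) ∧ (p = 0 → zp = z) := by
    intro p
    by_cases hp : p = 0
    · subst hp
      exact ⟨z, by simp [h.z0], fun t => by simpa using h.dz t, fun _ => rfl⟩
    · obtain ⟨zp, h1, h2⟩ := hg.sol (hadmΛ p).smooth.continuous x
      exact ⟨zp, by simp [h1], h2, fun h => (hp h).elim⟩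
  choose zz hz0 hz hzz using hex
  obtain ⟨Ξ, k1, k2⟩ := hg.exXi (P := V) h.zcont hΛ 0
  have hΨΞ : ∀ p, Ψ T (Ξ T p) = p := by
    intro p
    have h1 := intervalIntegral.integral_eq_sub_of_hasDerivAt (a := 0) (b := T)
      (fun t _ => hg.psi_xi h.dΨ k2 p t)
      ((h.Ψcont.clm_apply (hΛ.clm_apply continuous_const)).intervalIntegrable _ _)
    rw [k1] at h1
    simp only [zero_apply, map_zero, sub_zero] at h1
    rw [← h1]
    simp only [hΛa, map_sum, map_smul]
    rw [intervalIntegral.integral_finsetSum]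
    · simp only [intervalIntegral.integral_smul, hvb]
      exact b.sum_repr p
    · intro j _
      exact (continuous_const.smul
        (h.Ψcont.clm_apply (hv j).smooth.continuous)).intervalIntegrable _ _
  have hsurj : (Ξ T).range = ⊤ := by
    have hinj : Function.Injective (Ξ T : V →ₗ[ℝ] V) := by
      intro a c hac
      have h1 : Ψ T (Ξ T a) = Ψ T (Ξ T c) := congrArg (Ψ T) hac
      rwa [hΨΞ, hΨΞ] at h1
    exact LinearMap.range_eq_top.mpr (LinearMap.injective_iff_surjective.mp hinj)
  have hend := hg.endpoint hT.le hΛ hz0 hz k1 (by rw [hzz 0 rfl]; exact k2)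
  have hmap := hend.map_nhds_eq_of_surj hsurj
  simp only [hzz 0 rfl] at hmap
  rw [← hmap, Filter.mem_map]
  obtain ⟨C, hC, hCl⟩ := hg.param_lip (T := T) hΛ hz0 hz
  obtain ⟨t₀, ht₀, hmax⟩ := isCompact_Icc.exists_isMaxOn (nonempty_Icc.mpr hT.le)
    (h.zcont.norm.continuousOn (s := Icc 0 T))
  set ρ := ‖x‖ + 1 - ‖z t₀‖ with hρ
  have hρ0 : 0 < ρ := by linarith [h.ball t₀ ht₀]
  have hdel : 0 < ρ / (C + 1) := by positivity
  filter_upwards [ball_mem_nhds (0 : V) hdel] with p hp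
  rw [mem_ball_zero_iff, lt_div_iff₀ (by positivity)] at hp
  refine ⟨T, hT, _, hadmΛ p, zz p, by simp [hz0 p], fun t ht => ?_, rfl⟩
  rw [← hgf (zz p t)]
  · exact hz p t
  · rw [mem_closedBall_zero_iff]
    have h1 := hCl p 0 t ht
    rw [hzz 0 rfl, sub_zero] at h1
    have h2 : ‖z t‖ ≤ ‖z t₀‖ := hmax ht
    have h3 := norm_add_le (zz p t - z t) (z t)
    rw [sub_add_cancel] at h3
    nlinarith [norm_nonneg p]

end Access

end CC

open Set Filter Metric NNReal

namespace CC

set_option linter.unusedSectionVars false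

section Trotter
variable {V : Type*} [NormedAddCommGroup V] [NormedSpace ℝ V] [FiniteDimensional ℝ V]
variable {f : V → V} {E : Submodule ℝ V}

lemma trotter (hf : ContDiff ℝ (⊤ : ℕ∞) f) {C : Set V} (hC : IsClosed C)
    (hCE : ∀ a ∈ C, ∀ c ∈ E, a + c ∈ C)
    (hCf : ∀ a ∈ C, ∀ h > 0, ∀ b, Traj f (fun _ => 0) h a b → b ∈ C)
    {u : ℝ → V} (huE : ∀ t, u t ∈ E) {T : ℝ} (hT : 0 ≤ T) {x y : V} (hx : x ∈ C)
    (h : Traj f u T x y) : y ∈ C := by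
  obtain ⟨z, rfl, a2, rfl⟩ := h
  obtain ⟨r, hr, hzr⟩ := traj_bdd (z := z) (T := T)
    (fun t ht => (a2 t ht).continuousAt.continuousWithinAt)
  obtain ⟨χ, g, K, M, hg, -, hgf⟩ := trunc hf (r := 3 * r + 1) (by linarith)
  have hM : 0 ≤ M := (norm_nonneg _).trans (hg.bd 0)
  have hne : C.Nonempty := ⟨_, hx⟩
  have h0 : z 0 ∈ C := hx
  have hzc : ContinuousOn z (Icc 0 T) := fun t ht => (a2 t ht).continuousAt.continuousWithinAt
  have key := le_gronwallBound_of_liminf_deriv_right_le (f := fun t => infDist (z t) C)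
    (f' := fun t => K * infDist (z t) C) (δ := 0) (K := K) (ε := 0) (a := 0) (b := T)
    ((continuous_infDist_pt C).comp_continuousOn hzc) ?_
    (by simp only [infDist_zero_of_mem hx]; exact le_rfl)
    (fun t _ => by simp) T ⟨hT, le_rfl⟩
  · rw [gronwallBound_ε0_δ0] at key
    exact (hC.mem_iff_infDist_zero hne).mpr (le_antisymm key infDist_nonneg)
  intro t ht q hq
  have htI : t ∈ Icc 0 T := ⟨ht.1, ht.2.le⟩
  obtain ⟨a, haC, had⟩ := hC.exists_infDist_eq_dist hne (z t)
  have han : ‖a‖ < 3 * r := by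
    have h1 : dist (z t) a ≤ dist (z t) (z 0) := had ▸ infDist_le_dist_of_mem h0
    have h2 := hzr t htI
    have h3 := hzr 0 ⟨le_rfl, hT⟩
    have h4 := dist_triangle a (z t) 0
    have h5 := dist_triangle (z t) 0 (z 0)
    rw [dist_zero_right, dist_zero_right, dist_comm] at h4
    rw [dist_zero_right, dist_zero_left] at h5
    linarith
  obtain ⟨ζ, b1, b2⟩ := hg.sol (u := fun _ => (0 : V)) continuous_const a
  have hζC : ∀ h > 0, M * h ≤ 1 → ζ h ∈ C := by
    intro h hh hMh
    refine hCf a haC h hh _ ⟨ζ, b1, fun s hs => ?_, rfl⟩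
    rw [← hgf (ζ s)]
    · exact b2 s
    · have h1 := norm_image_sub_le_of_norm_deriv_le_segment' (f := ζ) (a := 0) (b := h) (C := M)
        (fun t _ => (b2 t).hasDerivWithinAt) (fun t _ => by simpa using hg.bd _) s hs
      rw [b1, sub_zero] at h1
      have h2 := norm_add_le (ζ s - a) a
      rw [sub_add_cancel] at h2
      rw [mem_closedBall_zero_iff]
      have h3 := mul_le_mul_of_nonneg_left hs.2 hM
      linarith
  let ρ : ℝ → V := fun s => z s - ζ (s - t) - (s - t) • u t
  have hρt : ρ t = z t - a := by simp [ρ, b1]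
  have hρ : HasDerivAt ρ (g (z t) - g a) t := by
    have h1 : HasDerivAt (fun s => ζ (s - t)) (g a) t := by
      have := HasDerivAt.comp_sub_const t t (b2 (t - t))
      simpa [b1] using this
    have h2 : HasDerivAt (fun s => (s - t) • u t) (u t) t := by
      simpa using ((hasDerivAt_id t).sub_const t).smul_const (u t)
    have h3 := ((a2 t htI).sub h1).sub h2
    rw [← hgf (z t) (by rw [mem_closedBall_zero_iff]; linarith [hzr t htI])] at h3
    have h4 : g (z t) + u t - g a - u t = g (z t) - g a := by abel
    rw [h4] at h3
    exact h3
  have hsl := hasDerivWithinAt_iff_tendsto_slope.mp (hρ.hasDerivWithinAt (s := Ioi t))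
  have hEq : Ioi t \ {t} = Ioi t := by
    ext s; simp only [Set.mem_sdiff, mem_Ioi, mem_singleton_iff]
    exact ⟨fun h => h.1, fun h => ⟨h, h.ne'⟩⟩
  rw [hEq] at hsl
  have hlt : ‖g (z t) - g a‖ < q := by
    refine lt_of_le_of_lt ?_ hq
    rw [had, ← dist_eq_norm]
    exact hg.lip.dist_le_mul _ _
  have hev := hsl.norm.eventually (gt_mem_nhds hlt)
  apply Eventually.frequently
  filter_upwards [hev, Ioc_mem_nhdsGT (show t < t + 1 / (M + 1) by
    have : 0 < 1 / (M + 1) := by positivity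
    linarith)] with s hs hst
  refine lt_of_le_of_lt ?_ hs
  have hst0 : 0 < s - t := by linarith [hst.1]
  have hmem : ζ (s - t) + (s - t) • u t ∈ C := by
    refine hCE _ (hζC (s - t) hst0 ?_) _ (E.smul_mem _ (huE t))
    have h1 : s - t ≤ 1 / (M + 1) := by linarith [hst.2]
    rw [le_div_iff₀ (by positivity)] at h1
    nlinarith
  have h1 : infDist (z s) C ≤ ‖ρ s‖ := by
    have := infDist_le_dist_of_mem (x := z s) hmem
    rwa [dist_eq_norm, ← sub_sub] at this
  have h2 : infDist (z t) C = ‖ρ t‖ := by rw [had, dist_eq_norm, hρt]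
  rw [slope_def_module, norm_smul, Real.norm_eq_abs, abs_of_pos (by positivity)]
  have h3 := norm_sub_norm_le (ρ s) (ρ t)
  have : 0 ≤ (s - t)⁻¹ := by positivity
  exact mul_le_mul_of_nonneg_left (by rw [h2]; linarith) this

end Trotter

end CC

open Set Filter Metric NNReal

namespace CC

set_option linter.unusedSectionVars false

section Measure

lemma Traj.unique {V : Type*} [NormedAddCommGroup V] [NormedSpace ℝ V] [FiniteDimensional ℝ V]
    {f : V → V} (hf : ContDiff ℝ (⊤ : ℕ∞) f) {u : ℝ → V} {T : ℝ} (hT : 0 ≤ T)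
    {x y y' : V} (h : Traj f u T x y) (h' : Traj f u T x y') : y = y' := by
  obtain ⟨z, a1, a2, rfl⟩ := h
  obtain ⟨z', b1, b2, rfl⟩ := h'
  obtain ⟨r, hr, hzr⟩ := traj_bdd (z := z) (T := T)
    (fun t ht => (a2 t ht).continuousAt.continuousWithinAt)
  obtain ⟨r', hr', hzr'⟩ := traj_bdd (z := z') (T := T)
    (fun t ht => (b2 t ht).continuousAt.continuousWithinAt)
  obtain ⟨χ, g, K, M, hg, -, hgf⟩ := trunc hf (r := r + r') (by linarith)
  refine hg.unique (a1.trans b1.symm) (u₁ := u) (u₂ := u) (fun _ _ => rfl) ?_ ?_ T ⟨hT, le_rfl⟩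
  · intro t ht
    rw [hgf _ (by rw [mem_closedBall_zero_iff]; linarith [hzr t ht])]
    exact a2 t ht
  · intro t ht
    rw [hgf _ (by rw [mem_closedBall_zero_iff]; linarith [hzr' t ht])]
    exact b2 t ht

lemma Traj.rev0 {V : Type*} [NormedAddCommGroup V] [NormedSpace ℝ V]
    {f : V → V} {T : ℝ} {x y : V} (h : Traj f (fun _ => 0) T x y) :
    Traj (fun x => - f x) (fun _ => 0) T y x := by
  simpa using h.rev

variable {N : ℕ}

lemma det_deriv {M B : ℝ → Matrix (Fin N) (Fin N) ℝ} {t : ℝ}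
    (hM : ∀ i j, HasDerivAt (fun t => M t i j) ((B t * M t) i j) t) :
    HasDerivAt (fun t => (M t).det) ((B t).trace * (M t).det) t := by
  let D : ContinuousMultilinearMap ℝ (fun _ : Fin N => Fin N → ℝ) ℝ :=
    { toMultilinearMap := (Matrix.detRowAlternating (n := Fin N) (R := ℝ)).toMultilinearMap
      cont := by
        change Continuous fun A : Matrix (Fin N) (Fin N) ℝ => A.det
        exact continuous_id.matrix_det }
  have hD : ∀ A : Matrix (Fin N) (Fin N) ℝ, D A = A.det := fun A => rfl
  have h1 : HasDerivAt (fun t => (fun i => M t i : Fin N → Fin N → ℝ))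
      (fun i => (B t * M t) i) t := by
    rw [hasDerivAt_pi]
    intro i
    rw [hasDerivAt_pi]
    exact fun j => hM i j
  have h2 := (D.hasFDerivAt (fun i => M t i)).comp_hasDerivAt t h1
  refine HasDerivAt.congr_deriv h2 ?_
  rw [ContinuousMultilinearMap.linearDeriv_apply]
  have h3 : ∀ i, D (Function.update (fun i => M t i) i ((B t * M t) i)) =
      (B t * M t * (M t).adjugate) i i := by
    intro i
    change ((M t).updateRow i ((B t * M t) i)).det = _
    rw [← Matrix.cramer_transpose_apply, Matrix.cramer_eq_adjugate_mulVec,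
      ← Matrix.adjugate_transpose, Matrix.mulVec_transpose]
    rfl
  simp only [h3]
  rw [Matrix.mul_assoc, Matrix.mul_adjugate]
  simp only [Matrix.trace, Finset.sum_mul, Matrix.mul_smul, Matrix.mul_one, Matrix.smul_apply,
    smul_eq_mul, Matrix.diag_apply]
  exact Finset.sum_congr rfl fun i _ => mul_comm _ _

lemma xi_det {g : (Fin N → ℝ) → (Fin N → ℝ)} {z : ℝ → Fin N → ℝ}
    {Ξ : ℝ → (Fin N → ℝ) →L[ℝ] (Fin N → ℝ)} (h0 : Ξ 0 = ContinuousLinearMap.id ℝ _)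
    (hΞ : ∀ t, HasDerivAt Ξ ((fderiv ℝ g (z t)).comp (Ξ t)) t)
    (htr : ∀ t, ∑ i, fderiv ℝ g (z t) (Pi.single i 1) i = 0) (t : ℝ) : (Ξ t).det = 1 := by
  let M : ℝ → Matrix (Fin N) (Fin N) ℝ := fun t => LinearMap.toMatrix' (Ξ t : _ →ₗ[ℝ] _)
  let B : ℝ → Matrix (Fin N) (Fin N) ℝ := fun t =>
    LinearMap.toMatrix' (fderiv ℝ g (z t) : _ →ₗ[ℝ] _)
  have hdet : ∀ t, (M t).det = (Ξ t).det := fun t => by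
    simp only [M]
    rw [LinearMap.det_toMatrix']
  have hM : ∀ t i j, HasDerivAt (fun t => M t i j) ((B t * M t) i j) t := by
    intro t i j
    have h1 : HasDerivAt (fun t => Ξ t (Pi.single j 1))
        (fderiv ℝ g (z t) (Ξ t (Pi.single j 1))) t := by
      simpa using (hΞ t).clm_apply (hasDerivAt_const t (Pi.single j (1 : ℝ)))
    have h2 := (hasDerivAt_pi.mp h1) i
    have h3 : B t * M t = LinearMap.toMatrix' (((fderiv ℝ g (z t)).comp (Ξ t) :
        (Fin N → ℝ) →L[ℝ] (Fin N → ℝ)) : (Fin N → ℝ) →ₗ[ℝ] (Fin N → ℝ)) := by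
      simp only [M, B]
      rw [← LinearMap.toMatrix'_comp]
      rfl
    rw [h3]
    simp only [M, LinearMap.toMatrix'_apply]
    exact h2
  have hd : ∀ t, HasDerivAt (fun t => (M t).det) 0 t := by
    intro t
    have := det_deriv (M := M) (B := B) (hM t)
    have htr' : (B t).trace = 0 := by
      rw [← htr t]
      simp [Matrix.trace, B, LinearMap.toMatrix'_apply]
    rwa [htr', zero_mul] at this
  have := is_const_of_deriv_eq_zero (f := fun t => (M t).det)
    (fun t => (hd t).differentiableAt) (fun t => (hd t).deriv) t 0
  simp only [hdet] at this
  rw [this, h0]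
  exact LinearMap.det_id

lemma measure_back {f : (Fin N → ℝ) → (Fin N → ℝ)} (hf : ContDiff ℝ (⊤ : ℕ∞) f)
    (hdiv : ∀ z : Fin N → ℝ, ∑ i, fderiv ℝ f z (Pi.single i 1) i = 0)
    {H : (Fin N → ℝ) → ℝ} (hH : ContDiff ℝ (⊤ : ℕ∞) H)
    (hcons : ∀ z : Fin N → ℝ, fderiv ℝ H z (f z) = 0)
    (hproper : ∀ K : ℝ, 0 < K → IsCompact {z : Fin N → ℝ | H z ≤ K})
    {W : Set (Fin N → ℝ)} (hW : IsOpen W)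
    (hWf : ∀ a ∈ W, ∀ h > 0, ∀ b, Traj f (fun _ => 0) h a b → b ∈ W)
    {y a : Fin N → ℝ} (hy : y ∈ W) {s : ℝ} (hs : 0 < s)
    (hya : Traj (fun x => - f x) (fun _ => 0) s y a) : a ∈ closure W := by
  by_contra ha
  obtain ⟨ε, hε, hball⟩ := Metric.isOpen_iff.mp isClosed_closure.isOpen_compl a ha
  obtain ⟨δ, hδ, hcont⟩ := hya.cont hf.neg continuous_const hs.le hε
  set K₀ : ℝ := max (H y) 0 + 1 with hK₀
  have hK₀0 : 0 < K₀ := by positivity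
  have hHy : H y < K₀ := by have := le_max_left (H y) 0; linarith
  have hcpt := hproper K₀ hK₀0
  obtain ⟨r₁, hr₁⟩ := hcpt.isBounded.subset_closedBall 0
  set r := max r₁ 1 with hr
  have hr0 : 0 < r := by positivity
  have hsub : {z : Fin N → ℝ | H z ≤ K₀} ⊆ closedBall 0 r :=
    hr₁.trans (closedBall_subset_closedBall (le_max_left _ _))
  obtain ⟨χ, g, K, M, hg, hgχ, hgf⟩ := trunc hf hr0
  choose F hF0 hF using fun q => hg.sol (u := fun _ => (0 : Fin N → ℝ)) continuous_const q
  have hHd : Differentiable ℝ H := hH.differentiable (by simp)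
  have hHF : ∀ q t, H (F q t) = H q := by
    intro q t
    have hd : ∀ t, HasDerivAt (fun t => H (F q t)) 0 t := by
      intro t
      have := (hHd (F q t)).hasFDerivAt.comp_hasDerivAt t (hF q t)
      rwa [add_zero, hgχ, map_smul, hcons, smul_zero] at this
    have := is_const_of_deriv_eq_zero (f := fun t => H (F q t))
      (fun t => (hd t).differentiableAt) (fun t => (hd t).deriv) t 0
    simpa [hF0] using this
  set WK : Set (Fin N → ℝ) := W ∩ {z | H z < K₀} with hWK
  have hKo : IsOpen {z : Fin N → ℝ | H z < K₀} := isOpen_lt hH.continuous continuous_const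
  have hWKo : IsOpen WK := hW.inter hKo
  have hgf' : ∀ z, H z < K₀ → g z = f z := fun z hz => hgf z (hsub (le_of_lt hz))
  have htraj : ∀ q, H q < K₀ → Traj f (fun _ => 0) s q (F q s) := by
    intro q hq
    refine ⟨F q, hF0 q, fun t _ => ?_, rfl⟩
    rw [← hgf' _ (by rw [hHF]; exact hq)]
    exact hF q t
  have hmaps : ∀ q ∈ WK, F q s ∈ WK := by
    intro q hq
    refine ⟨hWf q hq.1 s hs _ (htraj q hq.2), ?_⟩
    change H _ < K₀
    rw [hHF]; exact hq.2
  have hinj : InjOn (fun q => F q s) WK := by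
    intro q hq q' hq' h
    simp only at h
    have h1 := (htraj q hq.2).rev0
    have h2 := (htraj q' hq'.2).rev0
    rw [← h] at h2
    exact h1.unique hf.neg hs.le h2
  have hder : ∀ q ∈ WK, ∃ A : (Fin N → ℝ) →L[ℝ] (Fin N → ℝ),
      HasFDerivAt (fun q => F q s) A q ∧ A.det = 1 := by
    intro q hq
    have hc : Continuous (F q) := continuous_iff_continuousAt.mpr fun t => (hF q t).continuousAt
    obtain ⟨Ξ, k1, k2⟩ := hg.exXi (P := Fin N → ℝ) (Λ := fun _ => 0) hc continuous_const
      (ContinuousLinearMap.id ℝ _)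
    have h1 := hg.endpoint (P := Fin N → ℝ) hs.le (u := fun _ => 0) (Λ := fun _ => 0)
      continuous_const (A := ContinuousLinearMap.id ℝ _) (x := q) (z := fun p => F (q + p))
      (fun p => by simp [hF0]) (fun p t => by simpa using hF (q + p) t) k1
      (by simpa using k2)
    refine ⟨Ξ s, ?_, ?_⟩
    · have h2 : HasFDerivAt (fun p => F (q + p) s) (Ξ s) (q - q) := by
        rw [sub_self]; exact h1.hasFDerivAt
      have h3 := HasFDerivAt.comp (f := fun x => x - q) q h2 ((hasFDerivAt_id q).sub_const q)
      simpa [Function.comp_def] using h3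
    · refine xi_det k1 (fun t => by simpa using k2 t) (fun t => ?_) s
      have hge : g =ᶠ[𝓝 (F q t)] f := by
        filter_upwards [hKo.mem_nhds (show H (F q t) < K₀ by rw [hHF]; exact hq.2)] with w hw
        exact hgf' w hw
      rw [hge.fderiv_eq]; exact hdiv _
  choose! A hA1 hA2 using hder
  have hvol := MeasureTheory.lintegral_abs_det_fderiv_eq_addHaar_image MeasureTheory.volume
    hWKo.measurableSet (fun q hq => (hA1 q hq).hasFDerivWithinAt) hinj
  rw [MeasureTheory.setLIntegral_congr_fun (g := fun _ => 1) hWKo.measurableSet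
    (fun q hq => by simp [hA2 q hq])] at hvol
  simp only [MeasureTheory.lintegral_const, one_mul, MeasureTheory.Measure.restrict_apply,
    MeasurableSet.univ, univ_inter] at hvol
  set U := ball y δ ∩ WK with hU
  have hUo : IsOpen U := isOpen_ball.inter hWKo
  have hUne : U.Nonempty := ⟨y, mem_ball_self hδ, hy, hHy⟩
  have hdisj : Disjoint ((fun q => F q s) '' WK) U := by
    rw [Set.disjoint_left]
    rintro _ ⟨q, hq, rfl⟩ ⟨hb, -⟩
    obtain ⟨a', h1, h2⟩ := hcont _ hb
    have h3 : a' = q := h2.unique hf.neg hs.le (htraj q hq.2).rev0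
    subst h3
    exact hball h1 (subset_closure hq.1)
  have hle : MeasureTheory.volume ((fun q => F q s) '' WK) + MeasureTheory.volume U ≤
      MeasureTheory.volume WK := by
    rw [← MeasureTheory.measure_union hdisj hUo.measurableSet]
    refine MeasureTheory.measure_mono (union_subset ?_ inter_subset_right)
    rintro _ ⟨q, hq, rfl⟩
    exact hmaps q hq
  have hfin : MeasureTheory.volume WK ≠ ⊤ := by
    refine (lt_of_le_of_lt (MeasureTheory.measure_mono ?_) hcpt.measure_lt_top).ne
    exact fun z hz => (show H z ≤ K₀ from le_of_lt hz.2)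
  have hpos : 0 < MeasureTheory.volume U := hUo.measure_pos _ hUne
  rw [← hvol] at hle
  have := ENNReal.lt_add_right hfin hpos.ne'
  exact absurd hle (not_le.mpr this)

end Measure

end CC

open Set Filter Metric NNReal

namespace CC

set_option linter.unusedSectionVars false

section Final

lemma reach_dense {N : ℕ} {ι : Type*} {f : (Fin N → ℝ) → (Fin N → ℝ)}
    (hf : ContDiff ℝ (⊤ : ℕ∞) f)
    (hdiv : ∀ z : Fin N → ℝ, ∑ i, fderiv ℝ f z (Pi.single i 1) i = 0)
    {H : (Fin N → ℝ) → ℝ} (hH : ContDiff ℝ (⊤ : ℕ∞) H)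
    (hcons : ∀ z : Fin N → ℝ, fderiv ℝ H z (f z) = 0)
    (hproper : ∀ K : ℝ, 0 < K → IsCompact {z : Fin N → ℝ | H z ≤ K})
    {E : Submodule ℝ (Fin N → ℝ)} {e : ι → Fin N → ℝ} (he : ∀ i, e i ∈ E)
    (hL : ∀ p v : Fin N → ℝ, ∃ Y, LL f e Y ∧ Y p = v)
    {O : Set (Fin N → ℝ)} (hO : IsOpen O) (hOne : O.Nonempty) :
    Dense {y | ∃ x ∈ O, R f E x y} := by
  set W : Set (Fin N → ℝ) := {y | ∃ x ∈ O, R f E x y} with hWdef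
  have hWo : IsOpen W := by
    rw [Metric.isOpen_iff]
    rintro y ⟨x, hx, hR⟩
    obtain ⟨ε, hε, hb⟩ := Metric.isOpen_iff.mp hO x hx
    obtain ⟨δ, hδ, h⟩ := hR.rev.cont hf.neg hε
    refine ⟨δ, hδ, fun y' hy' => ?_⟩
    obtain ⟨x', h1, h2⟩ := h y' hy'
    exact ⟨x', hb h1, h2.rev'⟩
  have hWR : ∀ a ∈ W, ∀ b, R f E a b → b ∈ W := by
    rintro a ⟨x, hx, hR⟩ b hab
    exact ⟨x, hx, hR.trans hab⟩
  have hWf : ∀ a ∈ W, ∀ h > 0, ∀ b, Traj f (fun _ => 0) h a b → b ∈ W :=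
    fun a ha h hh b hab => hWR a ha b ⟨h, hh, _, Adm.zero E h, hab⟩
  set C := closure W with hCdef
  have hC : IsClosed C := isClosed_closure
  have hCR : ∀ a ∈ C, ∀ b, R f E a b → b ∈ C := by
    intro a ha b hab
    rw [hCdef, Metric.mem_closure_iff]
    intro ε hε
    obtain ⟨δ, hδ, h⟩ := hab.cont hf hε
    obtain ⟨a', ha', hd⟩ := Metric.mem_closure_iff.mp ha δ hδ
    obtain ⟨b', h1, h2⟩ := h a' (by rwa [dist_comm])
    exact ⟨b', hWR a' ha' b' h2, by rwa [dist_comm]⟩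
  have hCE : ∀ a ∈ C, ∀ c ∈ E, a + c ∈ C := by
    intro a ha c hc
    rw [← hC.closure_eq, Metric.mem_closure_iff]
    intro ε hε
    obtain ⟨y, h1, h2⟩ := R.jump hf a hc hε
    exact ⟨y, hCR a ha y h2, by rwa [dist_comm]⟩
  have hCf : ∀ a ∈ C, ∀ h > 0, ∀ b, Traj (fun x => - f x) (fun _ => 0) h a b → b ∈ C := by
    intro a ha h hh b hab
    rw [← hC.closure_eq, Metric.mem_closure_iff]
    intro ε hε
    obtain ⟨δ, hδ, h1⟩ := hab.cont hf.neg continuous_const hh.le hε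
    obtain ⟨a', ha', hd⟩ := Metric.mem_closure_iff.mp ha δ hδ
    obtain ⟨b', h2, h3⟩ := h1 a' (by rwa [dist_comm])
    exact ⟨b', measure_back hf hdiv hH hcons hproper hWo hWf ha' hh h3, by rwa [dist_comm]⟩
  have hCR' : ∀ a ∈ C, ∀ b, R (fun x => - f x) E a b → b ∈ C := by
    rintro a ha b ⟨T, hT, u, hu, h⟩
    exact trotter hf.neg hC hCE hCf hu.mem hT.le ha h
  have hCo : IsOpen C := by
    rw [Metric.isOpen_iff]
    intro b hb
    obtain ⟨y, hy⟩ := access hf he hL b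
    obtain ⟨ε, hε, hball⟩ := Metric.mem_nhds_iff.mp hy
    have hby : R f E b y := hball (mem_ball_self hε)
    obtain ⟨δ, hδ, h⟩ := hby.cont hf hε
    refine ⟨δ, hδ, fun b' hb' => ?_⟩
    obtain ⟨y', h1, h2⟩ := h b' hb'
    exact hCR' y' (hCR b hb y' (hball h1)) b' h2.rev
  have hne : C.Nonempty := by
    obtain ⟨x, hx⟩ := hOne
    obtain ⟨y, hy⟩ := access hf he hL x
    have hxy : y ∈ {y | R f E x y} := mem_of_mem_nhds hy
    exact ⟨y, subset_closure ⟨x, hx, hxy⟩⟩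
  exact dense_iff_closure_eq.mpr (IsClopen.eq_univ ⟨hC, hCo⟩ hne)

lemma reach_all {N : ℕ} {ι : Type*} {f : (Fin N → ℝ) → (Fin N → ℝ)}
    (hf : ContDiff ℝ (⊤ : ℕ∞) f)
    (hdiv : ∀ z : Fin N → ℝ, ∑ i, fderiv ℝ f z (Pi.single i 1) i = 0)
    {H : (Fin N → ℝ) → ℝ} (hH : ContDiff ℝ (⊤ : ℕ∞) H)
    (hcons : ∀ z : Fin N → ℝ, fderiv ℝ H z (f z) = 0)
    (hproper : ∀ K : ℝ, 0 < K → IsCompact {z : Fin N → ℝ | H z ≤ K})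
    {E : Submodule ℝ (Fin N → ℝ)} {e : ι → Fin N → ℝ} (he : ∀ i, e i ∈ E)
    (hL : ∀ p v : Fin N → ℝ, ∃ Y, LL f e Y ∧ Y p = v) (z₀ z₁ : Fin N → ℝ) : R f E z₀ z₁ := by
  obtain ⟨y₀, h0⟩ := access hf he hL z₀
  obtain ⟨y₁, h1⟩ := access hf.neg he (fun p v => by
    obtain ⟨Y, hY, h⟩ := hL p v
    exact ⟨Y, hY.rev, h⟩) z₁
  have hd := reach_dense hf hdiv hH hcons hproper he hL
    (isOpen_interior (s := {y | R f E z₀ y})) ⟨y₀, mem_interior_iff_mem_nhds.mpr h0⟩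
  obtain ⟨y, hy1, x, hx, hR⟩ := hd.inter_open_nonempty _ isOpen_interior
    ⟨y₁, mem_interior_iff_mem_nhds.mpr h1⟩
  have h2' : x ∈ {y | R f E z₀ y} := interior_subset hx
  have h2 : R f E z₀ x := h2'
  have h3' : y ∈ {y | R (fun x => - f x) E z₁ y} := interior_subset hy1
  have h3 : R (fun x => - f x) E z₁ y := h3'
  exact (h2.trans hR).trans h3.rev'

end Final

end CC

/-- **Controllability of conservative systems.** If `f` is a smooth divergence-free vector
field on `ℝ^N` with a smooth conserved quantity `H` having compact sublevel sets, `E` is a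
linear subspace with basis `e₁,…,eₙ`, and the Lie algebra generated by the time-extended
vector fields `f̃(z,t) = (f z, 1)`, `ẽᵢ(z,t) = (eᵢ, 0)` spans `ℝ^{N+1}` at every point, then
for all `z₀, z₁` there are a time `T > 0` and a smooth control `u : [0,T] → E` such that the
solution of `ż = f z + u t`, `z 0 = z₀` satisfies `z T = z₁`. -/
theorem controllability_of_conservative_systems
    {N n : ℕ}
    (f : (Fin N → ℝ) → (Fin N → ℝ)) (hf : ContDiff ℝ (⊤ : ℕ∞) f)
    -- `f` is divergence-free
    (hdiv : ∀ z : Fin N → ℝ, ∑ i, fderiv ℝ f z (Pi.single i 1) i = 0)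
    -- `H` is a smooth conserved quantity
    (H : (Fin N → ℝ) → ℝ) (hH : ContDiff ℝ (⊤ : ℕ∞) H)
    (hcons : ∀ z : Fin N → ℝ, fderiv ℝ H z (f z) = 0)
    -- the sublevel sets of `H` are compact
    (hproper : ∀ K : ℝ, 0 < K → IsCompact {z : Fin N → ℝ | H z ≤ K})
    -- `E` is a linear subspace with basis `e₁,…,eₙ`
    (E : Submodule ℝ (Fin N → ℝ)) (e : Fin n → (Fin N → ℝ))
    (he_indep : LinearIndependent ℝ e) (he_span : Submodule.span ℝ (Set.range e) = E)
    -- Hörmander condition for the time-extended vector fields on `ℝ^{N+1} = ℝ^N × ℝ`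
    (hHorm : ∀ p : (Fin N → ℝ) × ℝ,
      Submodule.span ℝ {v : (Fin N → ℝ) × ℝ | ∃ X : (Fin N → ℝ) × ℝ → (Fin N → ℝ) × ℝ,
        LieGen ({fun q : (Fin N → ℝ) × ℝ => (f q.1, (1 : ℝ))} ∪
          Set.range (fun i : Fin n => fun _ : (Fin N → ℝ) × ℝ => (e i, (0 : ℝ)))) X ∧
        X p = v} = ⊤)
    (z₀ z₁ : Fin N → ℝ) :
    ∃ (T : ℝ), 0 < T ∧ ∃ u : ℝ → (Fin N → ℝ), ContDiff ℝ (⊤ : ℕ∞) u ∧ (∀ t, u t ∈ E) ∧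
      ∃ z : ℝ → (Fin N → ℝ), z 0 = z₀ ∧
        (∀ t ∈ Set.Icc (0 : ℝ) T, HasDerivAt z (f (z t) + u t) t) ∧
        z T = z₁ := by
  have he : ∀ i, e i ∈ E := fun i => he_span ▸ Submodule.subset_span ⟨i, rfl⟩
  obtain ⟨T, hT, u, hu, h⟩ := CC.reach_all hf hdiv hH hcons hproper he (CC.LL.span hf hHorm) z₀ z₁
  obtain ⟨z, a1, a2, a3⟩ := h
  exact ⟨T, hT, u, hu.smooth, hu.mem, z, a1, a2, a3⟩
end

section
/- Let H : ℝ^N → [0,∞) be a smooth function whose sublevel sets {z : H(z) ≤ K} are compact for every K > 0, and fix a splitting ℝ^N = ℝ^n × ℝ^m with coordinates (x,y), so that Δ_x H denotes the Laplacian of H in the x variables only. Then there exists a smooth increasing function g : [0,∞) → ℝ with g(0) = 0 such that (i) ∫_{ℝ^N} exp(−g(H(z))) dz < ∞, and (ii) there exists a constant C with exp(−2g(H(z))) · Δ_x H(z) ≤ C + H(z) for every z ∈ ℝ^N. -/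
open MeasureTheory

lemma aux_g (φ : ℕ → ℝ) : ∃ g : ℝ → ℝ, ContDiff ℝ (⊤ : ℕ∞) g ∧ Monotone g ∧ g 0 = 0 ∧
    ∀ (k : ℕ) (t : ℝ), (k : ℝ) + 1 ≤ t → φ k ≤ g t := by
  let S : ℕ → ℝ → ℝ := fun K t => ∑ k ∈ Finset.range K, |φ k| * Real.smoothTransition (t - k)
  have hS : ∀ K : ℕ, ∀ t : ℝ, t ≤ K → S ⌈t⌉₊ t = S K t := by
    intro K t ht
    apply Finset.sum_subset
    · exact Finset.range_mono (Nat.ceil_le.2 ht)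
    · intro k _ hk
      rw [Finset.mem_range, not_lt] at hk
      rw [Real.smoothTransition.zero_of_nonpos, mul_zero]
      have := Nat.ceil_le.1 hk
      linarith
  have hmono : ∀ K, Monotone (S K) := by
    intro K a b hab
    apply Finset.sum_le_sum
    intro k _
    exact mul_le_mul_of_nonneg_left (Real.smoothTransition.monotone (by linarith)) (abs_nonneg _)
  have hsm : ∀ K, ContDiff ℝ (⊤ : ℕ∞) (S K) := by
    intro K
    apply ContDiff.sum
    intro k _
    exact contDiff_const.mul (Real.smoothTransition.contDiff.comp (contDiff_id.sub contDiff_const))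
  refine ⟨fun t => S ⌈t⌉₊ t, ?_, ?_, by simp [S], ?_⟩
  · rw [contDiff_iff_contDiffAt]
    intro t
    obtain ⟨K, hK⟩ := exists_nat_gt t
    refine (hsm K).contDiffAt.congr_of_eventuallyEq ?_
    filter_upwards [Iio_mem_nhds hK] with u hu
    exact hS K u (le_of_lt hu)
  · intro a b hab
    obtain ⟨K, hK⟩ := exists_nat_gt b
    show S _ a ≤ S _ b
    rw [hS K a (by linarith), hS K b hK.le]
    exact hmono K hab
  · intro k t hkt
    have hk : k ∈ Finset.range ⌈t⌉₊ := by
      rw [Finset.mem_range, Nat.lt_ceil]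
      linarith
    have h1 := Finset.single_le_sum (f := fun k : ℕ => |φ k| * Real.smoothTransition (t - k))
      (fun i _ => mul_nonneg (abs_nonneg _) (Real.smoothTransition.nonneg _)) hk
    simp only [Real.smoothTransition.one_of_one_le (show 1 ≤ t - k by linarith), mul_one] at h1
    exact (le_abs_self _).trans h1

lemma aux_dom {E : Type*} [TopologicalSpace E] (H F : E → ℝ) (hF : Continuous F)
    (hpos : ∀ z, 0 ≤ H z) (hproper : ∀ K : ℝ, 0 < K → IsCompact {z | H z ≤ K}) :
    ∃ g : ℝ → ℝ, ContDiff ℝ (⊤ : ℕ∞) g ∧ Monotone g ∧ g 0 = 0 ∧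
      ∃ A : ℝ, 0 ≤ A ∧ ∀ z, F z ≤ g (H z) + A := by
  have hb : ∀ K : ℝ, 0 < K → ∃ M, ∀ z, H z ≤ K → F z ≤ M := by
    intro K hK
    obtain ⟨M, hM⟩ := (hproper K hK).bddAbove_image hF.continuousOn
    exact ⟨M, fun z hz => hM ⟨z, hz, rfl⟩⟩
  choose φ hφ using fun k : ℕ => hb ((k : ℝ) + 2) (by positivity)
  obtain ⟨A, hA⟩ := hb 1 one_pos
  obtain ⟨g, h1, h2, h3, h4⟩ := aux_g φ
  refine ⟨g, h1, h2, h3, |A|, abs_nonneg _, fun z => ?_⟩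
  have hg0 : 0 ≤ g (H z) := h3 ▸ h2 (hpos z)
  rcases le_or_gt (H z) 1 with h | h
  · linarith [hA z h, le_abs_self A]
  · have ha := Nat.floor_le (show 0 ≤ H z - 1 by linarith)
    have hb := Nat.lt_floor_add_one (H z - 1)
    have := hφ ⌊H z - 1⌋₊ z (by linarith)
    have := h4 ⌊H z - 1⌋₊ (H z) (by linarith)
    linarith [abs_nonneg A]

/-- Given a smooth proper nonnegative function `H` on `ℝ^N = ℝ^n × ℝ^m`, there is a smooth
increasing function `g` with `g 0 = 0` such that `exp (-g ∘ H)` is integrable and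
`exp (-2 g (H z)) * Δₓ H z ≤ C + H z` for some constant `C`, where `Δₓ` is the Laplacian
in the `x` variables only. -/
theorem exists_g_integrable_and_laplacian_bound
    {n m : ℕ}
    (H : (Fin n → ℝ) × (Fin m → ℝ) → ℝ) (hH : ContDiff ℝ (⊤ : ℕ∞) H)
    (hHpos : ∀ z, 0 ≤ H z)
    (hproper : ∀ K : ℝ, 0 < K → IsCompact {z : (Fin n → ℝ) × (Fin m → ℝ) | H z ≤ K}) :
    ∃ g : ℝ → ℝ, ContDiffOn ℝ (⊤ : ℕ∞) g (Set.Ici 0) ∧ MonotoneOn g (Set.Ici 0) ∧ g 0 = 0 ∧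
      Integrable (fun z : (Fin n → ℝ) × (Fin m → ℝ) => Real.exp (-g (H z))) volume ∧
      ∃ C : ℝ, ∀ z : (Fin n → ℝ) × (Fin m → ℝ),
        Real.exp (-2 * g (H z)) *
            (∑ i, fderiv ℝ (fun w => fderiv ℝ H w ((Pi.single i 1, 0) :
              (Fin n → ℝ) × (Fin m → ℝ))) z ((Pi.single i 1, 0) :
              (Fin n → ℝ) × (Fin m → ℝ)))
          ≤ C + H z := by
  set L : (Fin n → ℝ) × (Fin m → ℝ) → ℝ := fun z =>
    ∑ i, fderiv ℝ (fun w => fderiv ℝ H w ((Pi.single i 1, 0) :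
              (Fin n → ℝ) × (Fin m → ℝ))) z ((Pi.single i 1, 0) :
              (Fin n → ℝ) × (Fin m → ℝ)) with hL
  have hLc : Continuous L := by
    apply continuous_finsetSum
    intro i _
    have h1 : ContDiff ℝ 1 (fun w => fderiv ℝ H w ((Pi.single i 1, 0) :
              (Fin n → ℝ) × (Fin m → ℝ))) :=
      (hH.fderiv_right (m := 1) (by norm_cast)).clm_apply contDiff_const
    exact (h1.continuous_fderiv one_ne_zero).clm_apply continuous_const
  set r : ℝ := Module.finrank ℝ ((Fin n → ℝ) × (Fin m → ℝ)) + 1 with hr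
  have hr0 : 0 ≤ r := by positivity
  have hlog0 : ∀ z : (Fin n → ℝ) × (Fin m → ℝ), 0 ≤ r * Real.log (1 + ‖z‖) := fun z =>
    mul_nonneg hr0 (Real.log_nonneg (by linarith [norm_nonneg z]))
  obtain ⟨g, g1, g2, g3, A, hA0, hA⟩ := aux_dom H
    (fun z => |L z| + r * Real.log (1 + ‖z‖))
    (hLc.abs.add (continuous_const.mul (Continuous.log (by fun_prop)
      (fun z => by positivity)))) hHpos hproper
  refine ⟨g, g1.contDiffOn, g2.monotoneOn _, g3, ?_, 1 + A, fun z => ?_⟩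
  · haveI : (volume : Measure ((Fin n → ℝ) × (Fin m → ℝ))).IsAddHaarMeasure := by
      rw [Measure.volume_eq_prod]
      exact Measure.prod.instIsAddHaarMeasure _ _
    have hint := (integrable_one_add_norm
      (μ := (volume : Measure ((Fin n → ℝ) × (Fin m → ℝ)))) (r := r)
      (by rw [hr]; linarith)).const_mul (Real.exp A)
    refine hint.mono' ?_ (Filter.Eventually.of_forall fun z => ?_)
    · exact (Real.continuous_exp.comp
        (g1.continuous.comp hH.continuous).neg).aestronglyMeasurable
    · rw [Real.norm_eq_abs, Real.abs_exp, Real.rpow_def_of_pos (by positivity), ← Real.exp_add,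
        Real.exp_le_exp]
      have : |L z| + r * Real.log (1 + ‖z‖) ≤ g (H z) + A := hA z
      linarith [abs_nonneg (L z)]
  · have hg0 : 0 ≤ g (H z) := g3 ▸ g2 (hHpos z)
    have h1 : L z ≤ g (H z) + A := by
      have : |L z| + r * Real.log (1 + ‖z‖) ≤ g (H z) + A := hA z
      linarith [le_abs_self (L z), hlog0 z]
    change Real.exp (-2 * g (H z)) * L z ≤ 1 + A + H z
    have h2 : Real.exp (-2 * g (H z)) ≤ 1 := Real.exp_le_one_iff.2 (by linarith)
    have h3 : Real.exp (-2 * g (H z)) * g (H z) ≤ 1 := by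
      have h4 : g (H z) ≤ Real.exp (2 * g (H z)) := by
        linarith [Real.add_one_le_exp (2 * g (H z))]
      calc _ ≤ Real.exp (-2 * g (H z)) * Real.exp (2 * g (H z)) :=
            mul_le_mul_of_nonneg_left h4 (Real.exp_pos _).le
        _ = 1 := by rw [← Real.exp_add]; simp
    have h5 := mul_le_mul_of_nonneg_left h1 (Real.exp_pos (-2 * g (H z))).le
    have h6 := mul_le_mul_of_nonneg_right h2 hA0
    linarith [hHpos z]
end

section
/- Let f : ℝ^N → ℝ^N be a smooth divergence-free vector field, let H : ℝ^N → ℝ be smooth with ⟨∇H(z), f(z)⟩ = 0 for all z ∈ ℝ^N, fix a splitting ℝ^N = ℝ^n × ℝ^m with coordinates (x,y), and let g : ℝ → ℝ be smooth. Define ρ(z) = exp(−g(H(z))). Then ρ satisfies the stationary Fokker–Planck identity: −∇·(f ρ) + ∇_x·( g′(H) e^{−2g(H)} ρ ∇_x H ) + ∇_x·( e^{−2g(H)} ∇_x ρ ) = 0 at every point of ℝ^N, where ∇_x· denotes the divergence taken in the x variables and ∇_x the gradient in the x variables. -/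
noncomputable section

/-- The phase space `ℝ^N = ℝ^n × ℝ^m` with coordinates `(x, y)`. -/
abbrev Phase (n m : ℕ) := (Fin n → ℝ) × (Fin m → ℝ)

/-- The `i`-th coordinate direction in the `x` variables. -/
def ex (n m : ℕ) (i : Fin n) : Phase n m := (Pi.single i 1, 0)

/-- The `j`-th coordinate direction in the `y` variables. -/
def ey (n m : ℕ) (j : Fin m) : Phase n m := (0, Pi.single j 1)

/-- The gradient in the `x` variables of a scalar function. -/
def gradx {n m : ℕ} (F : Phase n m → ℝ) (z : Phase n m) : Fin n → ℝ :=
  fun i => fderiv ℝ F z (ex n m i)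

/-- The divergence in the `x` variables of an `ℝ^n`-valued function. -/
def divx {n m : ℕ} (F : Phase n m → (Fin n → ℝ)) (z : Phase n m) : ℝ :=
  ∑ i, fderiv ℝ F z (ex n m i) i

/-- The full divergence of a vector field on `ℝ^n × ℝ^m`. -/
def divFull {n m : ℕ} (F : Phase n m → Phase n m) (z : Phase n m) : ℝ :=
  (∑ i, (fderiv ℝ F z (ex n m i)).1 i) + ∑ j, (fderiv ℝ F z (ey n m j)).2 j

/-- **Stationary Fokker–Planck identity.** If `f` is smooth and divergence-free, `H` is a
smooth conserved quantity for `f`, and `g : ℝ → ℝ` is smooth, then `ρ = exp (-g ∘ H)`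
satisfies `-∇·(f ρ) + ∇ₓ·(g'(H) e^{-2g(H)} ρ ∇ₓH) + ∇ₓ·(e^{-2g(H)} ∇ₓρ) = 0` everywhere. -/
theorem stationary_fokkerPlanck
    {n m : ℕ}
    (f : Phase n m → Phase n m) (hf : ContDiff ℝ (⊤ : ℕ∞) f)
    (hdiv : ∀ z, divFull f z = 0)
    (H : Phase n m → ℝ) (hH : ContDiff ℝ (⊤ : ℕ∞) H)
    (hcons : ∀ z, fderiv ℝ H z (f z) = 0)
    (g : ℝ → ℝ) (hg : ContDiff ℝ (⊤ : ℕ∞) g)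
    (ρ : Phase n m → ℝ) (hρ : ρ = fun z => Real.exp (-g (H z))) :
    ∀ z : Phase n m,
      -divFull (fun w => ρ w • f w) z
        + divx (fun w => (deriv g (H w) * Real.exp (-2 * g (H w)) * ρ w) • gradx H w) z
        + divx (fun w => Real.exp (-2 * g (H w)) • gradx ρ w) z = 0 := by
  intro z
  have hHd : Differentiable ℝ H := hH.differentiable (by simp)
  have hgd : Differentiable ℝ g := hg.differentiable (by simp)
  have hfd : Differentiable ℝ f := hf.differentiable (by simp)
  have hρ' : ∀ w, HasFDerivAt ρ ((-(deriv g (H w) * ρ w)) • fderiv ℝ H w) w := by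
    intro w
    have h1 : HasDerivAt (fun t => Real.exp (-g t))
        (Real.exp (-g (H w)) * (-deriv g (H w))) (H w) :=
      ((hgd (H w)).hasDerivAt.neg).exp
    have h2 := h1.comp_hasFDerivAt w (hHd w).hasFDerivAt
    have h3 : -(deriv g (H w) * ρ w) = Real.exp (-g (H w)) * (-deriv g (H w)) := by
      simp only [hρ]
      ring
    rw [h3, hρ]
    exact h2
  have hneg : (fun w => Real.exp (-2 * g (H w)) • gradx ρ w) =
      -(fun w => (deriv g (H w) * Real.exp (-2 * g (H w)) * ρ w) • gradx H w) := by
    funext w i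
    simp only [gradx, (hρ' w).fderiv, Pi.smul_apply, Pi.neg_apply, smul_eq_mul,
      ContinuousLinearMap.smul_apply]
    ring
  have hdn : ∀ F : Phase n m → (Fin n → ℝ), divx (-F) z = -divx F z := by
    intro F
    simp [divx, fderiv_neg]
  have hlin : ∀ L : Phase n m →L[ℝ] ℝ, ∀ v : Phase n m,
      (∑ i, L (ex n m i) * v.1 i) + ∑ j, L (ey n m j) * v.2 j = L v := by
    intro L v
    have hv : v = (∑ i, v.1 i • ex n m i) + ∑ j, v.2 j • ey n m j := by
      ext k
      · simp [ex, ey, Prod.fst_sum, Finset.sum_apply, Pi.single_apply]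
      · simp [ex, ey, Prod.snd_sum, Finset.sum_apply, Pi.single_apply]
    conv_rhs => rw [hv]
    simp [map_sum, mul_comm]
  have hfull : divFull (fun w => ρ w • f w) z = 0 := by
    have hp := ((hρ' z).smul (hfd z).hasFDerivAt).fderiv
    have hp' : fderiv ℝ (fun w => ρ w • f w) z = _ := hp
    have hd := hdiv z
    have hl := hlin ((-(deriv g (H z) * ρ z)) • fderiv ℝ H z) (f z)
    have h0 : ((-(deriv g (H z) * ρ z)) • fderiv ℝ H z) (f z) = 0 := by
      simp [hcons z]
    rw [h0] at hl
    unfold divFull at hd ⊢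
    rw [hp']
    generalize (-(deriv g (H z) * ρ z)) • fderiv ℝ H z = L at hl
    simp only [ContinuousLinearMap.add_apply, ContinuousLinearMap.smul_apply,
      ContinuousLinearMap.smulRight_apply, Prod.fst_add, Prod.snd_add, Prod.smul_fst,
      Prod.smul_snd, Pi.add_apply, Pi.smul_apply, smul_eq_mul, Finset.sum_add_distrib,
      ← Finset.mul_sum]
    linear_combination ρ z * hd + hl
  rw [hneg, hdn, hfull]
  ring
end
end

section
/- Let g : ℝ → [−1,1] be a differentiable odd function with g′(x) > 0 for all x, and let φ : ℝ → [0,1] be a function with φ(y) = 0 for |y| ≤ 2 and φ(y) = 1 for |y| ≥ 3. Consider the control system on ℝ²: ẋ = u(t) − x, ẏ = g(y + g(x)) − y φ(y), where u is any continuous control. Then for every y ∈ (1,2) and every x ∈ ℝ one has g(y + g(x)) − y φ(y) > 0; consequently, every solution (x(t), y(t)) on [0,T] with y(0) > 1 satisfies y(t) > 1 for all t ∈ [0,T]. In particular, no control can steer a point with y-coordinate greater than 1 to a point with y-coordinate less than or equal to 1, so the system is not approximately controllable. -/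
/-- For the control system `ẋ = u(t) - x`, `ẏ = g(y + g(x)) - y φ(y)` with `g` odd, strictly
increasing and `[-1,1]`-valued, and `φ` vanishing on `{|y| ≤ 2}`: one has
`g(y + g(x)) - y φ(y) > 0` whenever `y ∈ (1,2)`, and consequently every solution starting
with `y(0) > 1` keeps `y(t) > 1` forever, whatever the control is; so the system is not
approximately controllable. -/
theorem counterexample_not_approximately_controllable
    (g : ℝ → ℝ) (hg : Differentiable ℝ g)
    (hodd : ∀ x, g (-x) = -g x)
    (hrange : ∀ x, g x ∈ Set.Icc (-1 : ℝ) 1)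
    (hg' : ∀ x, 0 < deriv g x)
    (φ : ℝ → ℝ)
    (hφrange : ∀ y, φ y ∈ Set.Icc (0 : ℝ) 1)
    (hφ0 : ∀ y : ℝ, |y| ≤ 2 → φ y = 0)
    (hφ1 : ∀ y : ℝ, 3 ≤ |y| → φ y = 1) :
    (∀ y ∈ Set.Ioo (1 : ℝ) 2, ∀ x : ℝ, 0 < g (y + g x) - y * φ y) ∧
      ∀ (T : ℝ), 0 ≤ T → ∀ (u : ℝ → ℝ), Continuous u →
        ∀ x y : ℝ → ℝ,
          (∀ t ∈ Set.Icc (0 : ℝ) T, HasDerivAt x (u t - x t) t) →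
          (∀ t ∈ Set.Icc (0 : ℝ) T, HasDerivAt y (g (y t + g (x t)) - y t * φ (y t)) t) →
          1 < y 0 → ∀ t ∈ Set.Icc (0 : ℝ) T, 1 < y t := by
  have hmono : StrictMono g := strictMono_of_deriv_pos hg'
  have h0 : g 0 = 0 := by
    have h := hodd 0
    rw [neg_zero] at h
    linarith
  have hlow : ∀ x, -1 < g x := fun x =>
    lt_of_le_of_lt (hrange (x - 1)).1 (hmono (by linarith))
  have key : ∀ y ∈ Set.Ioo (1 : ℝ) 2, ∀ x : ℝ, 0 < g (y + g x) - y * φ y := by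
    intro y hy x
    have h2 : φ y = 0 := hφ0 y (by rw [abs_of_pos (by linarith [hy.1])]; exact hy.2.le)
    have h3 : g 0 < g (y + g x) := hmono (by linarith [hy.1, hlow x])
    rw [h2]
    linarith
  refine ⟨key, ?_⟩
  intro T hT u hu x y hx hy hy0 t ht
  obtain ⟨c, hc1, hc2⟩ : ∃ c, 1 < c ∧ c < min (y 0) 2 :=
    exists_between (lt_min hy0 (by norm_num))
  have hc3 := lt_of_lt_of_le hc2 (min_le_left _ _)
  have hc4 := lt_of_lt_of_le hc2 (min_le_right _ _)
  have main := image_le_of_deriv_right_lt_deriv_boundary' (f := fun s => -y s)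
    (f' := fun s => -(g (y s + g (x s)) - y s * φ (y s))) (a := 0) (b := T)
    (fun s hs => (hy s hs).neg.continuousAt.continuousWithinAt)
    (fun s hs => (hy s ⟨hs.1, hs.2.le⟩).neg.hasDerivWithinAt)
    (B := fun _ => -c) (B' := fun _ => 0) (by simpa using hc3.le)
    continuousOn_const (fun s _ => hasDerivWithinAt_const _ _ _)
    (fun s _ h => by
      have h' : y s = c := neg_injective h
      have := key (y s) (by rw [h']; exact ⟨hc1, hc4⟩) (x s)
      simpa using this) ht
  have : -y t ≤ -c := main
  linarith
end

section
/- Let g : ℝ → ℝ and φ : ℝ → ℝ be smooth, with g′(x) > 0 for all x ∈ ℝ. On ℝ² define the smooth vector fields X(x,y) = (1, 0) and F(x,y) = (−x, g(y + g(x)) − y φ(y)). Then the Lie bracket [X, F] is given by [X, F](x,y) = (−1, g′(y + g(x)) · g′(x)) at every point (x,y) ∈ ℝ², and for every point (x,y) ∈ ℝ² the two vectors X(x,y) and [X,F](x,y) are linearly independent, hence span ℝ². -/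
/-- For the vector fields `X(x,y) = (1,0)` and `F(x,y) = (-x, g(y + g(x)) - y φ(y))` on `ℝ²`,
with `g, φ` smooth and `g' > 0`, the Lie bracket is
`[X,F](x,y) = (-1, g'(y + g(x)) g'(x))`, and at every point `X` and `[X,F]` are linearly
independent, hence span `ℝ²`. -/
theorem lieBracket_spans_counterexample
    (g φ : ℝ → ℝ) (hg : ContDiff ℝ (⊤ : ℕ∞) g) (hφ : ContDiff ℝ (⊤ : ℕ∞) φ)
    (hg' : ∀ x, 0 < deriv g x)
    (X F : ℝ × ℝ → ℝ × ℝ)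
    (hX : X = fun _ => ((1 : ℝ), (0 : ℝ)))
    (hF : F = fun p => (-p.1, g (p.2 + g p.1) - p.2 * φ p.2)) :
    (∀ p : ℝ × ℝ, lieBracket X F p = (-1, deriv g (p.2 + g p.1) * deriv g p.1)) ∧
      ∀ p : ℝ × ℝ, LinearIndependent ℝ ![X p, lieBracket X F p] ∧
        Submodule.span ℝ {X p, lieBracket X F p} = (⊤ : Submodule ℝ (ℝ × ℝ)) := by
  have hgd : Differentiable ℝ g := hg.differentiable (by simp)
  have hφd : Differentiable ℝ φ := hφ.differentiable (by simp)
  have key : ∀ p : ℝ × ℝ,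
      lieBracket X F p = (-1, deriv g (p.2 + g p.1) * deriv g p.1) := by
    intro p
    have h1 : HasFDerivAt (fun p : ℝ × ℝ => p.1) (ContinuousLinearMap.fst ℝ ℝ ℝ) p :=
      hasFDerivAt_fst
    have h2 : HasFDerivAt (fun p : ℝ × ℝ => p.2) (ContinuousLinearMap.snd ℝ ℝ ℝ) p :=
      hasFDerivAt_snd
    have h3 := (hgd p.1).hasDerivAt.comp_hasFDerivAt p h1
    have h4 := (hgd (p.2 + g p.1)).hasDerivAt.comp_hasFDerivAt p (h2.add h3)
    have h5 := (hφd p.2).hasDerivAt.comp_hasFDerivAt p h2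
    have h6 := h1.neg.prodMk (h4.sub (h2.mul h5))
    have h7 := h6.congr_of_eventuallyEq (f₁ := F)
      (Filter.Eventually.of_forall fun q => by rw [hF]; rfl)
    have h8 : fderiv ℝ X p = 0 := by
      rw [hX]
      simp
    unfold lieBracket
    rw [h7.fderiv, h8, hX]
    simp
  refine ⟨key, fun p => ?_⟩
  have hX' : X p = (1, 0) := by rw [hX]
  rw [key p, hX']
  have hc : deriv g (p.2 + g p.1) * deriv g p.1 ≠ 0 := (mul_pos (hg' _) (hg' _)).ne'
  generalize deriv g (p.2 + g p.1) * deriv g p.1 = c at hc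
  constructor
  · rw [LinearIndependent.pair_iff]
    intro s t h
    simp only [Prod.smul_mk, Prod.mk_add_mk, Prod.mk_eq_zero, smul_eq_mul] at h
    obtain ⟨ha, hb⟩ := h
    have ht : t = 0 := by
      have : t * c = 0 := by linarith
      exact (mul_eq_zero.mp this).resolve_right hc
    subst ht
    exact ⟨by linarith, rfl⟩
  · rw [eq_top_iff]
    rintro ⟨a, b⟩ -
    rw [Submodule.mem_span_pair]
    refine ⟨a + b / c, b / c, ?_⟩
    ext
    · simp
    · simp [hc]
end

section
/- Fix N⋆ ∈ ℕ and let Λ = {k ∈ ℤ³ : k ≠ 0 and |k_j| ≤ N⋆ for j = 1,2,3}. For u = (u_k)_{k∈Λ} with u_k ∈ ℂ³, define the Galerkin–Euler vector field B by B_k(u) = −i ∑_{h,ℓ ∈ Λ, h+ℓ=k} (k · u_h) ( u_ℓ − ((k · u_ℓ)/|k|²) k ) for k ∈ Λ, where k · v = ∑_j k_j v_j. Then for every u satisfying the reality condition u_{−k} = conj(u_k) and the incompressibility condition k · u_k = 0 for all k ∈ Λ, the total energy ∑_{k∈Λ} |u_k|² is conserved by the flow of B; equivalently, ∑_{k∈Λ}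 Re( ⟨u_k, B_k(u)⟩ ) = 0, where ⟨a,b⟩ = ∑_{j=1}^3 conj(a_j) b_j. -/
open scoped BigOperators

/-- The finite set `Λ = {k ∈ ℤ³ : k ≠ 0, |k_j| ≤ N⋆ for all j}` of retained Fourier modes. -/
noncomputable def eulerModes (Nstar : ℕ) : Finset (Fin 3 → ℤ) :=
  (Fintype.piFinset fun _ : Fin 3 => Finset.Icc (-(Nstar : ℤ)) (Nstar : ℤ)).filter (· ≠ 0)

/-- The pairing `k · v = ∑_j k_j v_j` of an integer wave vector with a complex vector. -/
noncomputable def eulerDot (k : Fin 3 → ℤ) (v : Fin 3 → ℂ) : ℂ := ∑ j, (k j : ℂ) * v j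

/-- The Galerkin–Euler vector field:
`B_k(u) = -i ∑_{h+ℓ=k, h,ℓ∈Λ} (k·u_h) (u_ℓ - ((k·u_ℓ)/|k|²) k)`. -/
noncomputable def eulerB (Nstar : ℕ) (u : (Fin 3 → ℤ) → Fin 3 → ℂ) (k : Fin 3 → ℤ) :
    Fin 3 → ℂ := fun j =>
  -Complex.I * ∑ h ∈ eulerModes Nstar, ∑ l ∈ eulerModes Nstar,
    if h + l = k then
      eulerDot k (u h) * (u l j - eulerDot k (u l) / (∑ j', (k j' : ℂ) ^ 2) * (k j : ℂ))
    else 0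

theorem eulerModes_neg_mem {N : ℕ} {k : Fin 3 → ℤ} (hk : k ∈ eulerModes N) :
    -k ∈ eulerModes N := by
  simp only [eulerModes, Finset.mem_filter, Fintype.mem_piFinset, Finset.mem_Icc, ne_eq,
    neg_eq_zero, Pi.neg_apply] at hk ⊢
  refine ⟨fun a => ?_, hk.2⟩
  have := hk.1 a
  constructor <;> omega

theorem eulerModes_sum_neg (N : ℕ) (f : (Fin 3 → ℤ) → ℂ) :
    ∑ k ∈ eulerModes N, f (-k) = ∑ k ∈ eulerModes N, f k :=
  Finset.sum_nbij' (fun k => -k) (fun k => -k) (fun _ h => eulerModes_neg_mem h)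
    (fun _ h => eulerModes_neg_mem h) (fun _ _ => neg_neg _) (fun _ _ => neg_neg _)
    (fun _ _ => rfl)

theorem eulerDot_neg (k : Fin 3 → ℤ) (v : Fin 3 → ℂ) : eulerDot (-k) v = - eulerDot k v := by
  simp [eulerDot, Finset.sum_neg_distrib]

theorem eulerDot_add (k l : Fin 3 → ℤ) (v : Fin 3 → ℂ) :
    eulerDot (k + l) v = eulerDot k v + eulerDot l v := by
  simp [eulerDot, add_mul, Finset.sum_add_distrib]

/-- The cubic energy transfer term. -/
noncomputable def eulerF (u : (Fin 3 → ℤ) → Fin 3 → ℂ) (k h l : Fin 3 → ℤ) : ℂ :=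
  if h + l = k then eulerDot k (u h) * ∑ j, u (-k) j * u l j else 0

theorem eulerF_swap {N : ℕ} (u : (Fin 3 → ℤ) → Fin 3 → ℂ)
    (hincomp : ∀ k ∈ eulerModes N, eulerDot k (u k) = 0)
    (k h l : Fin 3 → ℤ) (hh : h ∈ eulerModes N) :
    eulerF u (-l) h (-k) = - eulerF u k h l := by
  unfold eulerF
  by_cases e : h + l = k
  · have e' : h + -k = -l := by rw [← e]; abel
    rw [if_pos e, if_pos e', neg_neg, eulerDot_neg, ← e, eulerDot_add, hincomp h hh]
    simp only [zero_add, neg_mul, mul_comm (u l _)]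
  · have e' : ¬ (h + -k = -l) := fun e' => e (by
      have : h = -l + k := by rw [← e']; abel
      rw [this]; abel)
    rw [if_neg e, if_neg e', neg_zero]

theorem eulerF_sum {N : ℕ} (u : (Fin 3 → ℤ) → Fin 3 → ℂ)
    (hincomp : ∀ k ∈ eulerModes N, eulerDot k (u k) = 0) :
    ∑ k ∈ eulerModes N, ∑ h ∈ eulerModes N, ∑ l ∈ eulerModes N, eulerF u k h l = 0 := by
  rw [Finset.sum_comm]
  refine Finset.sum_eq_zero fun h hh => ?_
  have key : ∑ k ∈ eulerModes N, ∑ l ∈ eulerModes N, eulerF u k h l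
      = - ∑ k ∈ eulerModes N, ∑ l ∈ eulerModes N, eulerF u k h l := by
    calc ∑ k ∈ eulerModes N, ∑ l ∈ eulerModes N, eulerF u k h l
        = ∑ k ∈ eulerModes N, ∑ l ∈ eulerModes N, eulerF u (-k) h (-l) := by
          rw [eulerModes_sum_neg N (fun k => ∑ l ∈ eulerModes N, eulerF u k h (-l))]
          exact Finset.sum_congr rfl fun k _ => (eulerModes_sum_neg N (eulerF u k h)).symm
      _ = ∑ k ∈ eulerModes N, ∑ l ∈ eulerModes N, eulerF u (-l) h (-k) := Finset.sum_comm
      _ = _ := by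
          simp only [eulerF_swap u hincomp _ h _ hh, Finset.sum_neg_distrib]
  exact self_eq_neg.mp key

theorem eulerB_pair {N : ℕ} (u : (Fin 3 → ℤ) → Fin 3 → ℂ)
    (hreal : ∀ k : Fin 3 → ℤ, u (-k) = fun j => starRingEnd ℂ (u k j))
    (hincomp : ∀ k ∈ eulerModes N, eulerDot k (u k) = 0)
    (k : Fin 3 → ℤ) (hk : k ∈ eulerModes N) :
    ∑ j, starRingEnd ℂ (u k j) * eulerB N u k j
      = -Complex.I * ∑ h ∈ eulerModes N, ∑ l ∈ eulerModes N, eulerF u k h l := by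
  have h0 : ∑ j, (k j : ℂ) * u (-k) j = 0 := by
    have := hincomp (-k) (eulerModes_neg_mem hk)
    rw [eulerDot_neg, neg_eq_zero] at this
    exact this
  have hc : ∀ j, starRingEnd ℂ (u k j) = u (-k) j := fun j => by rw [hreal k]
  simp only [hc, eulerB, mul_left_comm _ (-Complex.I), ← Finset.mul_sum]
  congr 1
  simp only [Finset.mul_sum]
  rw [Finset.sum_comm]
  refine Finset.sum_congr rfl fun h _ => ?_
  rw [Finset.sum_comm]
  refine Finset.sum_congr rfl fun l _ => ?_
  unfold eulerF
  split_ifs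
  · generalize eulerDot k (u l) / _ = c
    rw [Fin.sum_univ_three] at h0 ⊢
    rw [Fin.sum_univ_three]
    linear_combination (-c * eulerDot k (u h)) * h0
  · simp

/-- **Energy conservation for the Galerkin approximation of the 3D Euler equations.**
Under the reality condition `u_{-k} = conj u_k` and the incompressibility condition
`k · u_k = 0`, the total energy `∑_{k∈Λ} |u_k|²` is conserved by the flow of `B`:
`∑_{k∈Λ} Re ⟨u_k, B_k(u)⟩ = 0`. -/
theorem galerkin_euler_energy_conserved
    (Nstar : ℕ) (u : (Fin 3 → ℤ) → Fin 3 → ℂ)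
    (hreal : ∀ k : Fin 3 → ℤ, u (-k) = fun j => starRingEnd ℂ (u k j))
    (hincomp : ∀ k ∈ eulerModes Nstar, eulerDot k (u k) = 0) :
    ∑ k ∈ eulerModes Nstar,
      (∑ j, starRingEnd ℂ (u k j) * eulerB Nstar u k j).re = 0 := by
  rw [← Complex.re_sum, Finset.sum_congr rfl (eulerB_pair u hreal hincomp),
    ← Finset.mul_sum, eulerF_sum u hincomp]
  simp
end
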